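/- There are only finitely many unit-generated real quadratic orders having class number one. Equivalently, the set of integers n ≥ 3 with h_{n²−4} = 1, together with the set of integers n ≥ 1 with h_{n²+4} = 1, is finite. -/

import Mathlib

noncomputable section

/-- A complex square root of an integer `d`. -/
def sqrtD (d : ℤ) : ℂ :=
  if 0 ≤ d then ((Real.sqrt d : ℝ) : ℂ) else Complex.I * ((Real.sqrt (-d) : ℝ) : ℂ)

/-- The element `(Δ + √Δ)/2` generating the quadratic order of discriminant `Δ`. -/
def omegaD (d : ℤ) : ℂ := ((d : ℂ) + sqrtD d) / 2

/-- The quadratic order `O_Δ = ℤ[(Δ + √Δ)/2]` of discriminant `Δ`, as a subring of `ℂ`. -/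
def QOrder (d : ℤ) : Subring ℂ := Subring.closure {omegaD d}

/-- The class number `h_Δ`: the order of the (wide) class group of `O_Δ`,
the group of invertible fractional ideals modulo principal fractional ideals. -/
def classNumber (d : ℤ) : ℕ := Nat.card (ClassGroup (QOrder d))

section
open scoped nonZeroDivisors

theorem principal_of_mul_eq {R : Type*} [CommRing R] [IsDomain R] [Subsingleton (ClassGroup R)]
    (I J : Ideal R) (a : R) (ha : a ≠ 0) (h : I * J = Ideal.span {a}) :
    ∃ x : R, x ≠ 0 ∧ I = Ideal.span {x} := by
  have ha' : algebraMap R (FractionRing R) a ≠ 0 := by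
    simpa using ha
  have hu : (I : FractionalIdeal R⁰ (FractionRing R)) *
      ((J : FractionalIdeal R⁰ (FractionRing R)) *
        FractionalIdeal.spanSingleton R⁰ (algebraMap R (FractionRing R) a)⁻¹) = 1 := by
    rw [← mul_assoc, ← FractionalIdeal.coeIdeal_mul, h, FractionalIdeal.coeIdeal_span_singleton,
      FractionalIdeal.spanSingleton_mul_spanSingleton, mul_inv_cancel₀ ha',
      FractionalIdeal.spanSingleton_one]
  have := (ClassGroup.mk_eq_one_of_coe_ideal (I := Units.mkOfMulEqOne _ _ hu) (I' := I)
    (by simp)).1 (Subsingleton.elim _ _)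
  exact this

/-- Abstract form: primitive representation of `a` by the norm form. -/
theorem rep_of_form {R : Type*} [CommRing R] [IsDomain R] [Subsingleton (ClassGroup R)]
    (ε : R) (n e : ℤ) (hε : ε * ε = n * ε - e)
    (hspan : ∀ z : R, ∃ x y : ℤ, z = x + y * ε)
    (hind : ∀ x y : ℤ, (x : R) + y * ε = 0 → x = 0 ∧ y = 0)
    (a c k : ℤ) (ha : 0 < a) (hac : a * c = k ^ 2 - n * k + e)
    (hprim : ∃ u v w : ℤ, u * a + v * (2 * k - n) + w * c = 1) :
    ∃ x y : ℤ, IsCoprime x y ∧ |x ^ 2 + n * x * y + e * y ^ 2| = a := by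
  obtain ⟨u, v, w, huvw⟩ := hprim
  have hac' : (a : R) * c = k ^ 2 - n * k + e := by exact_mod_cast congrArg (Int.cast : ℤ → R) hac
  have hinj : ∀ x y x' y' : ℤ, (x : R) + y * ε = x' + y' * ε → x = x' ∧ y = y' := by
    intro x y x' y' h
    have := hind (x - x') (y - y') (by push_cast; linear_combination h)
    omega
  have ha0 : (a : R) ≠ 0 := by
    intro h
    have := hind a 0 (by simpa using h)
    omega
  -- the ideal and its conjugate
  have hprod : Ideal.span {(a : R), ε - k} * Ideal.span {(a : R), n - k - ε} = Ideal.span {(a : R)} := by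
    rw [Ideal.span_pair_mul_span_pair]
    apply le_antisymm
    · rw [Ideal.span_le]
      rintro z hz
      simp only [Set.mem_insert_iff, Set.mem_singleton_iff] at hz
      rw [SetLike.mem_coe, Ideal.mem_span_singleton]
      rcases hz with rfl | rfl | rfl | rfl
      · exact Dvd.intro _ rfl
      · exact Dvd.intro _ rfl
      · exact Dvd.intro_left _ rfl
      · refine ⟨c, ?_⟩
        rw [hac']
        linear_combination (-1 : R) * hε
    · rw [Ideal.span_singleton_le_iff_mem]
      have h1 : (a : R) = u * (a * a) + (-v) * (a * (n - k - ε)) + (-v) * ((ε - k) * a)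
          + w * ((ε - k) * (n - k - ε)) := by
        have : (u : R) * a + v * (2 * k - n) + w * c = 1 := by exact_mod_cast congrArg (Int.cast : ℤ → R) huvw
        linear_combination (-(a : R)) * this + w * hac' + (w : R) * hε
      set S : Ideal R := Ideal.span {(a : R) * a, a * (n - k - ε), (ε - k) * a, (ε - k) * (n - k - ε)} with hS
      have m1 : (a : R) * a ∈ S := Ideal.subset_span (by simp)
      have m2 : a * (n - k - ε) ∈ S := Ideal.subset_span (by simp)
      have m3 : (ε - k) * a ∈ S := Ideal.subset_span (by simp)
      have m4 : (ε - k) * (n - k - ε) ∈ S := Ideal.subset_span (by simp)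
      rw [h1]
      exact S.add_mem (S.add_mem (S.add_mem (S.mul_mem_left _ m1) (S.mul_mem_left _ m2))
        (S.mul_mem_left _ m3)) (S.mul_mem_left _ m4)
  obtain ⟨α, hα0, hα⟩ := principal_of_mul_eq _ _ _ ha0 hprod
  -- elements of the ideal in coordinates
  have hmem : ∀ z ∈ Ideal.span {(a : R), ε - k}, ∃ r s : ℤ, z = r * a + s * (ε - k) := by
    intro z hz
    obtain ⟨p, q, hpq⟩ := Ideal.mem_span_pair.1 hz
    obtain ⟨p1, p2, rfl⟩ := hspan p
    obtain ⟨q1, q2, rfl⟩ := hspan q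
    refine ⟨p1 + p2 * k - q2 * c, q1 + q2 * (n - k) + p2 * a , ?_⟩
    rw [← hpq]
    push_cast
    linear_combination (q2 : R) * hε + (q2 : R) * hac'
  have hαI : α ∈ Ideal.span {(a : R), ε - k} := by rw [hα]; exact Ideal.mem_span_singleton_self α
  have hαεI : α * ε ∈ Ideal.span {(a : R), ε - k} := Ideal.mul_mem_right _ _ hαI
  have haI : (a : R) ∈ Ideal.span {α} := by rw [← hα]; exact Ideal.subset_span (by simp)
  have htI : ε - k ∈ Ideal.span {α} := by rw [← hα]; exact Ideal.subset_span (by simp)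
  obtain ⟨r, s, hrs⟩ := hmem _ hαI
  obtain ⟨r', s', hrs'⟩ := hmem _ hαεI
  obtain ⟨β, hβ⟩ := Ideal.mem_span_singleton.1 haI
  obtain ⟨γ, hγ⟩ := Ideal.mem_span_singleton.1 htI
  obtain ⟨x, y, rfl⟩ := hspan α
  obtain ⟨b1, b2, rfl⟩ := hspan β
  obtain ⟨g1, g2, rfl⟩ := hspan γ
  have e1 := hinj x y (r * a - s * k) s (by push_cast; linear_combination hrs)
  have e2 := hinj (-(e * y)) (x + n * y) (r' * a - s' * k) s'
    (by push_cast; linear_combination hrs' - y * hε)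
  have e3 := hinj a 0 (x * b1 - e * y * b2) (x * b2 + y * b1 + n * y * b2)
    (by push_cast; linear_combination hβ + y * b2 * hε)
  have e4 := hinj (-k) 1 (x * g1 - e * y * g2) (x * g2 + y * g1 + n * y * g2)
    (by push_cast; linear_combination hγ + y * g2 * hε)
  refine ⟨x, y, ⟨g2, g1 + n * g2, by linarith [e4.2]⟩, ?_⟩
  obtain ⟨e1a, e1b⟩ := e1
  obtain ⟨e2a, e2b⟩ := e2
  obtain ⟨e3a, e3b⟩ := e3
  obtain ⟨e4a, e4b⟩ := e4
  have d1 : a ∣ x ^ 2 + n * x * y + e * y ^ 2 := by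
    refine ⟨r * s' - r' * s, ?_⟩
    have : x ^ 2 + n * x * y + e * y ^ 2 = x * (x + n * y) - y * (-(e * y)) := by ring
    rw [this, e2a, e2b]
    subst e1b
    rw [e1a]
    ring
  have d2 : x ^ 2 + n * x * y + e * y ^ 2 ∣ a := by
    exact ⟨b1 * g2 - b2 * g1, by linear_combination a * e4b + k * e3b + (x * g2 + y * g1 + n * y * g2) * e3a - (x * b2 + y * b1 + n * y * b2) * e4a⟩
  have := Int.natAbs_dvd_natAbs.2 d1
  have h2 := Int.natAbs_dvd_natAbs.2 d2
  have h3 := Nat.dvd_antisymm h2 this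
  rw [Int.abs_eq_natAbs, h3]
  omega

theorem isInt_of_sqrt {d : ℤ} (hd : 0 < d) (hns : ¬ IsSquare d) (x y : ℤ)
    (h : (x : ℝ) + y * Real.sqrt d = 0) : x = 0 ∧ y = 0 := by
  have hirr : Irrational (Real.sqrt d) := irrational_sqrt_intCast_iff.2 ⟨hns, hd.le⟩
  by_cases hy : y = 0
  · subst hy
    simp at h
    exact ⟨h, rfl⟩
  · exfalso
    apply hirr
    refine ⟨-(x : ℚ) / y, ?_⟩
    have : (y : ℝ) ≠ 0 := by exact_mod_cast hy
    push_cast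
    field_simp
    linarith

theorem rep_of_classNumber (n e : ℤ) (hd : 0 < n ^ 2 - 4 * e) (hns : ¬ IsSquare (n ^ 2 - 4 * e))
    (h1 : classNumber (n ^ 2 - 4 * e) = 1)
    (a c k : ℤ) (ha : 0 < a) (hac : a * c = k ^ 2 - n * k + e)
    (hprim : ∃ u v w : ℤ, u * a + v * (2 * k - n) + w * c = 1) :
    ∃ x y : ℤ, IsCoprime x y ∧ |x ^ 2 + n * x * y + e * y ^ 2| = a := by
  set d := n ^ 2 - 4 * e with hdd
  have hsub : Subsingleton (ClassGroup (QOrder d)) := (Nat.card_eq_one_iff_unique.1 h1).1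
  have hsq : sqrtD d = ((Real.sqrt d : ℝ) : ℂ) := by simp [sqrtD, hd.le]
  have hsq2 : sqrtD d * sqrtD d = d := by
    rw [hsq, ← Complex.ofReal_mul, Real.mul_self_sqrt (by exact_mod_cast hd.le)]
    simp
  have hpar : ∃ t : ℤ, n - d = 2 * t := by
    have : Even (n - n ^ 2) := by
      have := Int.even_mul_succ_self (n - 1)
      have h2 : n - n ^ 2 = - ((n - 1) * (n - 1 + 1)) := by ring
      rw [h2]; exact this.neg
    obtain ⟨t, ht⟩ := this
    exact ⟨t + 2 * e, by rw [hdd]; linarith⟩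
  obtain ⟨t, ht⟩ := hpar
  have htC : (n : ℂ) - d = 2 * t := by exact_mod_cast congrArg (Int.cast : ℤ → ℂ) ht
  have hdC : (d : ℂ) = n ^ 2 - 4 * e := by rw [hdd]; push_cast; ring
  set E : ℂ := (n + sqrtD d) / 2 with hE
  have hEE : E * E = n * E - e := by
    rw [hE]; linear_combination (1/4 : ℂ) * hsq2 + (1/4 : ℂ) * hdC
  have hEo : E = omegaD d + t := by
    rw [hE, omegaD]; linear_combination (1/2 : ℂ) * htC
  have hom : omegaD d ∈ QOrder d := Subring.subset_closure (by simp)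
  have hEm : E ∈ QOrder d := by
    rw [hEo]; exact Subring.add_mem _ hom (intCast_mem _ _)
  have hspan : ∀ z ∈ QOrder d, ∃ x y : ℤ, z = x + y * E := by
    intro z hz
    induction hz using Subring.closure_induction with
    | mem z hz =>
      rw [Set.mem_singleton_iff] at hz
      exact ⟨-t, 1, by rw [hz, hEo]; push_cast; ring⟩
    | zero => exact ⟨0, 0, by simp⟩
    | one => exact ⟨1, 0, by simp⟩
    | add p q _ _ hp hq =>
      obtain ⟨x, y, rfl⟩ := hp
      obtain ⟨x', y', rfl⟩ := hq
      exact ⟨x + x', y + y', by push_cast; ring⟩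
    | neg p _ hp =>
      obtain ⟨x, y, rfl⟩ := hp
      exact ⟨-x, -y, by push_cast; ring⟩
    | mul p q _ _ hp hq =>
      obtain ⟨x, y, rfl⟩ := hp
      obtain ⟨x', y', rfl⟩ := hq
      exact ⟨x * x' - e * y * y', x * y' + x' * y + n * y * y', by
        push_cast; linear_combination (y : ℂ) * y' * hEE⟩
  have hind : ∀ x y : ℤ, (x : ℂ) + y * E = 0 → x = 0 ∧ y = 0 := by
    intro x y h
    rw [hE, hsq] at h
    have h' : ((2 * x + n * y : ℤ) : ℝ) + y * Real.sqrt d = 0 := by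
      have : (((2 * x + n * y : ℤ) : ℝ) + y * Real.sqrt d : ℝ) = (0 : ℂ) := by
        push_cast
        linear_combination 2 * h
      exact_mod_cast this
    obtain ⟨h2, h3⟩ := isInt_of_sqrt hd hns _ _ h'
    subst h3
    simp at h2
    exact ⟨h2, rfl⟩
  refine rep_of_form (R := QOrder d) ⟨E, hEm⟩ n e ?_ ?_ ?_ a c k ha hac hprim
  · apply Subtype.ext; push_cast; exact hEE
  · rintro ⟨z, hz⟩
    obtain ⟨x, y, h⟩ := hspan z hz
    exact ⟨x, y, by apply Subtype.ext; push_cast; exact h⟩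
  · intro x y h
    apply hind
    have := congrArg (Subtype.val) h
    push_cast at this
    exact this

end

section

/-- The three binary forms whose positive values cover the norms. -/
def redForm (n : ℤ) (i : Fin 3) (a b : ℤ) : ℤ :=
  match i with
  | 0 => a ^ 2 + n * a * b + b ^ 2
  | 1 => n * a * b - a ^ 2 - b ^ 2
  | 2 => a ^ 2 + n * a * b - b ^ 2

/-- `m` is a value of one of the reduced forms at a positive point. -/
def IsRed (n m : ℤ) : Prop :=
  ∃ i : Fin 3, ∃ a b : ℤ, 1 ≤ a ∧ 1 ≤ b ∧ redForm n i a b = m ∧ (n - 2) * (a * b) ≤ 2 * m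

theorem isRed_pos {n : ℤ} (hn : 3 ≤ n) (N : ℕ) : ∀ a b : ℤ, 0 < a → 0 < b → a + b ≤ N →
    |a ^ 2 - n * a * b + b ^ 2| ≠ (Int.gcd a b : ℤ) ^ 2 → IsRed n |a ^ 2 - n * a * b + b ^ 2| := by
  induction N with
  | zero => intro a b ha hb h; push_cast at h; omega
  | succ N ih =>
    have key : ∀ a b : ℤ, 0 < a → a ≤ b → a + b ≤ N + 1 →
        |a ^ 2 - n * a * b + b ^ 2| ≠ (Int.gcd a b : ℤ) ^ 2 →
          IsRed n |a ^ 2 - n * a * b + b ^ 2| := by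
      intro a b ha hab hN hg
      have hb : 0 < b := lt_of_lt_of_le ha hab
      by_cases h2 : 2 * b ≤ n * a
      · have h3 : (n - 2) * (a * b) ≤ 2 * (n * a * b - a ^ 2 - b ^ 2) := by nlinarith
        have h4 : 0 ≤ (n - 2) * (a * b) := by
          apply mul_nonneg (by omega); positivity
        have h5 : |a ^ 2 - n * a * b + b ^ 2| = n * a * b - a ^ 2 - b ^ 2 := by
          rw [abs_of_nonpos (by linarith)]; ring
        rw [h5]
        exact ⟨1, a, b, ha, hb, rfl, h3⟩
      · push Not at h2
        have hQ : a ^ 2 - n * a * b + b ^ 2 = a ^ 2 - n * a * (n * a - b) + (n * a - b) ^ 2 := by ring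
        have hgcd : Int.gcd a b = Int.gcd a (n * a - b) := by
          rw [← Int.gcd_neg (a := a) (b := b)]
          have : n * a - b = -b + a * n := by ring
          rw [this, Int.gcd_add_mul_left_right]
        rw [hQ, hgcd] at hg
        rw [hQ]
        rcases lt_trichotomy (n * a - b) 0 with h | h | h
        · have h5 : |a ^ 2 - n * a * (n * a - b) + (n * a - b) ^ 2| =
              a ^ 2 + n * a * (b - n * a) + (b - n * a) ^ 2 := by
            rw [abs_of_nonneg]
            · ring
            · have : 0 ≤ n * a * (b - n * a) := by
                apply mul_nonneg; positivity; omega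
              nlinarith
          rw [h5]
          refine ⟨0, a, b - n * a, ha, by omega, rfl, ?_⟩
          have : 0 < a * (b - n * a) := by apply mul_pos ha; omega
          have h6 : 0 ≤ (n + 2) * (a * (b - n * a)) := by apply mul_nonneg; omega; exact this.le
          nlinarith [sq_nonneg (b - n * a), sq_nonneg a]
        · exfalso
          apply hg
          rw [h]
          simp
        · exact ih a (n * a - b) ha h (by omega) hg
    intro a b ha hb hN hg
    rcases le_total a b with h | h
    · exact key a b ha h (by exact_mod_cast hN) hg
    · have hs : a ^ 2 - n * a * b + b ^ 2 = b ^ 2 - n * b * a + a ^ 2 := by ring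
      rw [hs, Int.gcd_comm] at hg
      rw [hs]
      exact key b a hb h (by push_cast at hN; omega) hg

theorem isRed_one {n : ℤ} (hn : 3 ≤ n) (x y : ℤ)
    (hg : |x ^ 2 + n * x * y + 1 * y ^ 2| ≠ (Int.gcd x y : ℤ) ^ 2) :
    IsRed n |x ^ 2 + n * x * y + 1 * y ^ 2| := by
  have pp : ∀ x y : ℤ, 0 < x → 0 < y → IsRed n |x ^ 2 + n * x * y + 1 * y ^ 2| := by
    intro x y hx hy
    have hxy := mul_pos hx hy
    have : 0 ≤ n * (x * y) := by positivity
    rw [abs_of_nonneg (by nlinarith)]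
    exact ⟨0, x, y, hx, hy, by simp [redForm], by nlinarith⟩
  rcases lt_trichotomy x 0 with hx | hx | hx
  · rcases lt_trichotomy y 0 with hy | hy | hy
    · have := pp (-x) (-y) (by omega) (by omega)
      convert this using 2
      ring
    · subst hy; simp at hg
    · have := isRed_pos hn ((-x + y).toNat) (-x) y (by omega) hy (by omega)
      have h1 : (-x) ^ 2 - n * (-x) * y + y ^ 2 = x ^ 2 + n * x * y + 1 * y ^ 2 := by ring
      rw [h1, Int.neg_gcd] at this
      exact this hg
  · subst hx; simp at hg
  · rcases lt_trichotomy y 0 with hy | hy | hy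
    · have := isRed_pos hn ((x + -y).toNat) x (-y) hx (by omega) (by omega)
      have h1 : x ^ 2 - n * x * (-y) + (-y) ^ 2 = x ^ 2 + n * x * y + 1 * y ^ 2 := by ring
      rw [h1, Int.gcd_neg] at this
      exact this hg
    · subst hy; simp at hg
    · exact pp x y hx hy

theorem isRed_neg {n : ℤ} (hn : 3 ≤ n) (N : ℕ) : ∀ x y : ℤ, 0 < x → 0 < y → x + y ≤ N →
    |x ^ 2 + n * x * y - y ^ 2| ≠ (Int.gcd x y : ℤ) ^ 2 → IsRed n |x ^ 2 + n * x * y - y ^ 2| := by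
  induction N with
  | zero => intro a b ha hb h; push_cast at h; omega
  | succ N ih =>
    have key : ∀ x y : ℤ, 0 < x → 0 < y → 2 * y ≤ n * x → IsRed n |x ^ 2 + n * x * y - y ^ 2| := by
      intro x y hx hy h
      have hxy := mul_pos hx hy
      have h1 : (n - 2) * (x * y) ≤ 2 * (x ^ 2 + n * x * y - y ^ 2) := by nlinarith
      have h2 : 0 ≤ (n - 2) * (x * y) := mul_nonneg (by omega) hxy.le
      rw [abs_of_nonneg (by linarith)]
      exact ⟨2, x, y, hx, hy, rfl, h1⟩
    intro x y hx hy hN hg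
    by_cases h2 : 2 * y ≤ n * x
    · exact key x y hx hy h2
    push Not at h2
    have hQ : x ^ 2 + n * x * y - y ^ 2 = x ^ 2 + n * x * (n * x - y) - (n * x - y) ^ 2 := by ring
    have hgcd : Int.gcd x y = Int.gcd x (n * x - y) := by
      rw [← Int.gcd_neg (a := x) (b := y)]
      have : n * x - y = -y + x * n := by ring
      rw [this, Int.gcd_add_mul_left_right]
    rcases lt_trichotomy (n * x - y) 0 with h | h | h
    · have hQ' : |x ^ 2 + n * x * y - y ^ 2| =
          |(y - n * x) ^ 2 + n * (y - n * x) * x - x ^ 2| := by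
        rw [← abs_neg]; congr 1; ring
      have hg' : Int.gcd x y = Int.gcd (y - n * x) x := by
        rw [hgcd, ← Int.gcd_neg, Int.gcd_comm]; congr 1; ring
      rw [hQ', hg'] at hg
      rw [hQ']
      refine ih (y - n * x) x (by omega) hx ?_ hg
      push_cast at hN
      nlinarith
    · exfalso
      apply hg
      rw [hQ, hgcd, h]
      simp
    · rw [hQ]
      exact key x (n * x - y) hx h (by omega)

theorem isRed_neg_one {n : ℤ} (hn : 3 ≤ n) (x y : ℤ)
    (hg : |x ^ 2 + n * x * y + (-1) * y ^ 2| ≠ (Int.gcd x y : ℤ) ^ 2) :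
    IsRed n |x ^ 2 + n * x * y + (-1) * y ^ 2| := by
  have pp : ∀ x y : ℤ, 0 < x → 0 < y →
      |x ^ 2 + n * x * y + (-1) * y ^ 2| ≠ (Int.gcd x y : ℤ) ^ 2 →
      IsRed n |x ^ 2 + n * x * y + (-1) * y ^ 2| := by
    intro x y hx hy hg
    have h1 : x ^ 2 + n * x * y + (-1) * y ^ 2 = x ^ 2 + n * x * y - y ^ 2 := by ring
    rw [h1] at hg ⊢
    exact isRed_neg hn ((x + y).toNat) x y hx hy (by omega) hg
  -- rotation by ninety degrees
  have rot : ∀ x y : ℤ, |x ^ 2 + n * x * y + (-1) * y ^ 2| =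
      |y ^ 2 + n * y * (-x) + (-1) * (-x) ^ 2| := by
    intro x y
    rw [← abs_neg]; congr 1; ring
  have rotg : ∀ x y : ℤ, Int.gcd x y = Int.gcd y (-x) := by
    intro x y; rw [Int.gcd_neg, Int.gcd_comm]
  rcases lt_trichotomy x 0 with hx | hx | hx
  · rcases lt_trichotomy y 0 with hy | hy | hy
    · rw [rot, rotg, rot, rotg] at hg
      rw [rot, rot]
      exact pp _ _ (by omega) (by omega) hg
    · subst hy; simp at hg
    · rw [rot, rotg] at hg
      rw [rot]
      exact pp _ _ (by omega) (by omega) hg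
  · subst hx; simp at hg
  · rcases lt_trichotomy y 0 with hy | hy | hy
    · rw [rot, rotg, rot, rotg, rot, rotg] at hg
      rw [rot, rot, rot]
      exact pp _ _ (by omega) (by omega) hg
    · subst hy; simp at hg
    · exact pp x y hx hy hg

theorem isRed_of_norm {n e : ℤ} (hn : 3 ≤ n) (he : e = 1 ∨ e = -1) (x y : ℤ)
    (hg : |x ^ 2 + n * x * y + e * y ^ 2| ≠ (Int.gcd x y : ℤ) ^ 2) :
    IsRed n |x ^ 2 + n * x * y + e * y ^ 2| := by
  rcases he with rfl | rfl
  · exact isRed_one hn x y hg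
  · exact isRed_neg_one hn x y hg

theorem IsRed.le {n m : ℤ} (hn : 3 ≤ n) (h : IsRed n m) : n - 2 ≤ 2 * m := by
  obtain ⟨i, a, b, ha, hb, -, h⟩ := h
  have : 1 ≤ a * b := by nlinarith
  nlinarith

theorem not_isSquare_disc {n e : ℤ} (hn : 3 ≤ n) (he : e = 1 ∨ e = -1) :
    ¬ IsSquare (n ^ 2 - 4 * e) := by
  rintro ⟨r, hr⟩
  wlog h : 0 ≤ r with H
  · exact H hn he (-r) (by rw [hr]; ring) (by omega)
  rcases he with rfl | rfl
  · have h1 : r < n := by nlinarith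
    have h2 : n - 1 ≤ r := by nlinarith
    have : r = n - 1 := by omega
    subst this
    have : 2 * n = 5 := by linarith
    omega
  · have h1 : n < r := by nlinarith
    have h2 : r < n + 1 := by nlinarith
    omega

/-- A primitive form with leading coefficient `a > 1` forces `n` to be small. -/
theorem isRed_of_form {n e : ℤ} (hn : 3 ≤ n) (he : e = 1 ∨ e = -1)
    (h1 : classNumber (n ^ 2 - 4 * e) = 1)
    (a c k : ℤ) (ha : 1 < a) (hac : a * c = k ^ 2 - n * k + e)
    (hprim : ∃ u v w : ℤ, u * a + v * (2 * k - n) + w * c = 1) :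
    (∃ x y : ℤ, |x ^ 2 + n * x * y + e * y ^ 2| = a) ∧ n - 2 ≤ 2 * a := by
  have hd : 0 < n ^ 2 - 4 * e := by rcases he with rfl | rfl <;> nlinarith
  obtain ⟨x, y, hxy, hv⟩ := rep_of_classNumber n e hd (not_isSquare_disc hn he) h1 a c k
    (by omega) hac hprim
  refine ⟨⟨x, y, hv⟩, ?_⟩
  rw [Int.isCoprime_iff_gcd_eq_one] at hxy
  have := isRed_of_norm hn he x y (by rw [hv, hxy]; simp; omega)
  rw [hv] at this
  exact this.le hn

end

section

theorem even_small {n e : ℤ} (hn : 3 ≤ n) (he : e = 1 ∨ e = -1) (hev : Even n)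
    (h1 : classNumber (n ^ 2 - 4 * e) = 1) : n ≤ 18 := by
  obtain ⟨t, rfl⟩ := hev
  rcases he with rfl | rfl
  · rcases Int.even_or_odd' t with ⟨s, rfl | rfl⟩
    · have := (isRed_of_form hn (Or.inl rfl) h1 2 (1 - 2 * s ^ 2) (2 * s + 1) (by norm_num) (by ring)
        ⟨s ^ 2, 0, 1, by ring⟩).2
      omega
    · obtain ⟨r, hr⟩ := Int.even_mul_succ_self s
      have := (isRed_of_form hn (Or.inl rfl) h1 4 (1 - 2 * r) (2 * s + 1 + 2) (by norm_num)
        (by linear_combination 4 * hr)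
        ⟨r ^ 2, 0, 1 + 2 * r, by ring⟩).2
      omega
  · rcases Int.even_or_odd' t with ⟨s, rfl | rfl⟩
    · rcases Int.even_or_odd' s with ⟨r, rfl | rfl⟩
      · have := (isRed_of_form hn (Or.inr rfl) h1 8 (1 - 2 * r ^ 2) (2 * (2 * r) + 3) (by norm_num)
          (by ring) ⟨2 * r ^ 4, -2 * r ^ 4, 1 + 2 * r ^ 2, by ring⟩).2
        omega
      · have := (isRed_of_form hn (Or.inr rfl) h1 4 (-(2 * r + 1) ^ 2) (2 * (2 * r + 1) + 1)
          (by norm_num) (by ring) ⟨-(r ^ 2 + r), 0, -1, by ring⟩).2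
        omega
    · have := (isRed_of_form hn (Or.inr rfl) h1 2 (-(2 * s ^ 2 + 2 * s + 1)) (2 * s + 1)
          (by norm_num) (by ring) ⟨-(s ^ 2 + s), 0, -1, by ring⟩).2
      omega

theorem odd_disc {n e : ℤ} (he : e = 1 ∨ e = -1) (hodd : Odd n) : (n ^ 2 - 4 * e) % 8 = 5 := by
  obtain ⟨t, rfl⟩ := hodd
  obtain ⟨r, hr⟩ := Int.even_mul_succ_self t
  have : (2 * t + 1) ^ 2 = 8 * r + 1 := by linear_combination 4 * hr
  rcases he with rfl | rfl <;> rw [this] <;> omega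

theorem sq_odd_mod {j : ℤ} (hj : Odd j) : j ^ 2 % 8 = 1 := by
  obtain ⟨t, rfl⟩ := hj
  obtain ⟨r, hr⟩ := Int.even_mul_succ_self t
  have : (2 * t + 1) ^ 2 = 8 * r + 1 := by linear_combination 4 * hr
  rw [this]; omega

/-- Form `(a, b, c)` version of `isRed_of_form`. -/
theorem isRed_of_form' {n e : ℤ} (hn : 3 ≤ n) (he : e = 1 ∨ e = -1) (hodd : Odd n)
    (h1 : classNumber (n ^ 2 - 4 * e) = 1)
    (a b c : ℤ) (ha : 1 < a) (hb : Odd b) (hac : 4 * a * c = b ^ 2 - (n ^ 2 - 4 * e))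
    (hprim : ∃ u v w : ℤ, u * a + v * b + w * c = 1) :
    (∃ x y : ℤ, |x ^ 2 + n * x * y + e * y ^ 2| = a) ∧ n - 2 ≤ 2 * a := by
  obtain ⟨k, hk⟩ := hb.add_odd hodd
  have hb' : b = 2 * k - n := by omega
  subst hb'
  exact isRed_of_form hn he h1 a c k ha (by linarith) hprim

theorem ramified_large {n e : ℤ} (hn : 3 ≤ n) (he : e = 1 ∨ e = -1) (hodd : Odd n)
    (h1 : classNumber (n ^ 2 - 4 * e) = 1) (p : ℕ) (hp : p.Prime)
    (hpd : (p : ℤ) ∣ n ^ 2 - 4 * e) : n - 2 ≤ 2 * (p : ℤ) ^ 2 := by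
  have h8 := odd_disc he hodd
  set d := n ^ 2 - 4 * e with hd
  have hp' : Prime (p : ℤ) := Nat.prime_iff_prime_int.1 hp
  have hpodd : Odd (p : ℤ) := by
    rcases Int.even_or_odd (p : ℤ) with h | h
    · exfalso
      have : (2 : ℤ) ∣ d := dvd_trans h.two_dvd hpd
      omega
    · exact h
  have hp1 : (1 : ℤ) < p := by exact_mod_cast hp.one_lt
  have h4p : IsCoprime (4 : ℤ) p := by
    have : IsCoprime (2 : ℤ) p := by
      rw [Int.isCoprime_iff_gcd_eq_one, ← Int.isCoprime_iff_gcd_eq_one]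
      obtain ⟨t, ht⟩ := hpodd
      exact ⟨-t, 1, by rw [ht]; ring⟩
    have h2 := this.pow_left (m := 2)
    norm_num at h2
    exact h2
  have hpsq := sq_odd_mod hpodd
  by_cases hp2 : (p : ℤ) ^ 2 ∣ d
  · obtain ⟨D, hD⟩ := hp2
    have hD8 : D % 8 = 5 := by
      have : d % 8 = ((p : ℤ) ^ 2 % 8) * (D % 8) % 8 := by rw [hD, Int.mul_emod]
      rw [hpsq, h8] at this
      omega
    obtain ⟨j, hj, hjD⟩ : ∃ j : ℤ, Odd j ∧ ¬ (p : ℤ) ∣ j ^ 2 - D := by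
      by_cases h : (p : ℤ) ∣ D
      · refine ⟨1, odd_one, fun h' => ?_⟩
        have := dvd_add h' h
        norm_num at this
        exact hp'.not_isUnit (isUnit_of_dvd_one this)
      · refine ⟨p, hpodd, fun h' => h ?_⟩
        have := dvd_sub (dvd_pow_self (p : ℤ) (two_ne_zero)) h'
        simpa using this
    have hj8 := sq_odd_mod hj
    obtain ⟨c, hc⟩ : (4 : ℤ) ∣ j ^ 2 - D := by omega
    have hpc : ¬ (p : ℤ) ∣ c := fun h => hjD (by rw [hc]; exact Dvd.dvd.mul_left h 4)
    have hcop : IsCoprime ((p : ℤ) ^ 2) c :=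
      ((Prime.coprime_iff_not_dvd hp').2 hpc).pow_left
    obtain ⟨u, w, huw⟩ := hcop
    have := (isRed_of_form' hn he hodd h1 ((p : ℤ) ^ 2) (p * j) c (by nlinarith)
      (hpodd.mul hj) (by rw [← hd, hD]; linear_combination (-(p : ℤ) ^ 2) * hc)
      ⟨u, 0, w, by linarith⟩).2
    exact this
  · obtain ⟨c, hc⟩ : 4 * (p : ℤ) ∣ (p : ℤ) ^ 2 - d := by
      apply h4p.mul_dvd
      · omega
      · exact dvd_sub (dvd_pow_self _ two_ne_zero) hpd
    have hpc : ¬ (p : ℤ) ∣ c := by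
      rintro ⟨c', rfl⟩
      apply hp2
      exact ⟨1 - 4 * c', by linarith⟩
    obtain ⟨u, w, huw⟩ := (Prime.coprime_iff_not_dvd hp').2 hpc
    have := (isRed_of_form' hn he hodd h1 (p : ℤ) p c hp1
      hpodd (by rw [← hd, hc]) ⟨u, 0, w, by linarith⟩).2
    nlinarith

/-- The quadratic character modulo `d`. -/
def chi (d : ℕ) (m : ℕ) : ℤ := jacobiSym m d

theorem split_rep {n e : ℤ} (hn : 3 ≤ n) (he : e = 1 ∨ e = -1) (hodd : Odd n)
    (h1 : classNumber (n ^ 2 - 4 * e) = 1) (d : ℕ) (hd : (d : ℤ) = n ^ 2 - 4 * e)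
    (p : ℕ) (hp : p.Prime) (hchi : chi d p = 1) :
    ∃ x y : ℤ, |x ^ 2 + n * x * y + e * y ^ 2| = p := by
  have h8 := odd_disc he hodd
  rw [← hd] at h8
  have h8' : d % 8 = 5 := by omega
  have hdodd : Odd d := by rw [Nat.odd_iff]; omega
  have := Fact.mk hp
  have hp1 : (1 : ℤ) < p := by exact_mod_cast hp.one_lt
  rcases hp.eq_two_or_odd' with rfl | hpo
  · exfalso
    rw [chi] at hchi
    have : jacobiSym ((2 : ℕ) : ℤ) d = -1 := by
      push_cast
      rw [jacobiSym.at_two hdodd, ZMod.χ₈_nat_mod_eight, h8']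
      decide
    rw [this] at hchi
    norm_num at hchi
  · have hrec : jacobiSym (d : ℤ) p = 1 := by
      rw [← hchi, chi]
      exact jacobiSym.quadratic_reciprocity_one_mod_four (by omega) hpo
    have hsq : IsSquare ((d : ℤ) : ZMod p) := ZMod.isSquare_of_jacobiSym_eq_one hrec
    have hnd : ¬ (p : ℤ) ∣ d := by
      intro h
      have : jacobiSym (d : ℤ) p = 0 := by
        rw [jacobiSym.eq_zero_iff]
        refine ⟨hp.ne_zero, ?_⟩
        intro hg
        have h2 : (p : ℤ) ∣ 1 := by
          rw [← Nat.cast_one, ← hg]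
          exact Int.dvd_coe_gcd h (dvd_refl _)
        have := Int.le_of_dvd one_pos h2
        omega
      rw [this] at hrec
      norm_num at hrec
    obtain ⟨s, hs⟩ := hsq
    obtain ⟨s, rfl⟩ := ZMod.intCast_surjective s
    have hs' : (p : ℤ) ∣ s ^ 2 - d := by
      rw [← ZMod.intCast_zmod_eq_zero_iff_dvd]
      push_cast
      push_cast at hs
      rw [hs]; ring
    have hpoZ : Odd (p : ℤ) := by exact_mod_cast hpo
    obtain ⟨b, hb, hbd⟩ : ∃ b : ℤ, Odd b ∧ (p : ℤ) ∣ b ^ 2 - d := by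
      rcases Int.even_or_odd s with h | h
      · refine ⟨s + p, h.add_odd hpoZ, ?_⟩
        have : (s + p) ^ 2 - (d : ℤ) = (s ^ 2 - d) + p * (2 * s + p) := by ring
        rw [this]
        exact dvd_add hs' (Dvd.intro _ rfl)
      · exact ⟨s, h, hs'⟩
    have h4p : IsCoprime (4 : ℤ) p := by
      have : IsCoprime (2 : ℤ) p := by
        obtain ⟨t, ht⟩ := hpoZ
        exact ⟨-t, 1, by rw [ht]; ring⟩
      have h2 := this.pow_left (m := 2)
      norm_num at h2
      exact h2
    have hb8 := sq_odd_mod hb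
    obtain ⟨c, hc⟩ : 4 * (p : ℤ) ∣ b ^ 2 - d := h4p.mul_dvd (by omega) hbd
    have hpb : ¬ (p : ℤ) ∣ b := by
      intro h
      apply hnd
      have := dvd_sub (dvd_pow h two_ne_zero) hbd
      simpa using this
    obtain ⟨u, v, huv⟩ := (Prime.coprime_iff_not_dvd (Nat.prime_iff_prime_int.1 hp)).2 hpb
    exact (isRed_of_form' hn he hodd h1 p b c hp1 hb (by rw [← hd, hc])
      ⟨u, v, 0, by linarith⟩).1

end

section
open ArithmeticFunction

theorem chi_one (d : ℕ) : chi d 1 = 1 := by simp [chi]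

theorem chi_mul (d a b : ℕ) : chi d (a * b) = chi d a * chi d b := by
  simp [chi, jacobiSym.mul_left]

theorem chi_pow (d a k : ℕ) : chi d (a ^ k) = chi d a ^ k := by
  simp [chi, jacobiSym.pow_left]

theorem chi_tri (d a : ℕ) : chi d a = 0 ∨ chi d a = 1 ∨ chi d a = -1 := jacobiSym.trichotomy _ _

/-- The sum of the quadratic character over divisors. -/
def divSum (d m : ℕ) : ℤ := ∑ t ∈ m.divisors, chi d t

def chiArith (d : ℕ) : ArithmeticFunction ℤ := ⟨fun m => if m = 0 then 0 else chi d m, by simp⟩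

theorem chiArith_mult (d : ℕ) : (chiArith d).IsMultiplicative := by
  constructor
  · simp [chiArith, chi_one]
  · intro m n _
    by_cases hm : m = 0
    · simp [chiArith, hm]
    by_cases hn : n = 0
    · simp [chiArith, hn]
    simp [chiArith, hm, hn, chi_mul]

theorem divSum_eq (d m : ℕ) : divSum d m = (((zeta : ArithmeticFunction ℕ) : ArithmeticFunction ℤ) * chiArith d) m := by
  rw [coe_zeta_mul_apply, divSum]
  apply Finset.sum_congr rfl
  intro t ht
  have : t ≠ 0 := (Nat.pos_of_mem_divisors ht).ne'
  simp [chiArith, this]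

theorem divSum_mul (d : ℕ) {a b : ℕ} (h : a.Coprime b) :
    divSum d (a * b) = divSum d a * divSum d b := by
  simp only [divSum_eq]
  exact (isMultiplicative_zeta.natCast.mul (chiArith_mult d)).map_mul_of_coprime h

theorem divSum_one (d : ℕ) : divSum d 1 = 1 := by simp [divSum, chi_one]

theorem divSum_prime_pow (d p k : ℕ) (hp : p.Prime) :
    divSum d (p ^ k) = ∑ i ∈ Finset.range (k + 1), chi d p ^ i := by
  simp [divSum, Nat.sum_divisors_prime_pow hp, chi_pow]

theorem divSum_nonneg (d m : ℕ) : 0 ≤ divSum d m := by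
  induction m using Nat.recOnPosPrimePosCoprime with
  | prime_pow p k hp hk =>
    rw [divSum_prime_pow d p k hp]
    rcases chi_tri d p with h | h | h
    · rw [h]; exact Finset.sum_nonneg fun i _ => by positivity
    · rw [h]; exact Finset.sum_nonneg fun i _ => by positivity
    · rw [h, neg_one_geom_sum]; split_ifs <;> norm_num
  | zero => simp [divSum]
  | one => simp [divSum_one]
  | coprime a b _ _ hab iha ihb =>
    rw [divSum_mul d hab]; exact mul_nonneg iha ihb

theorem rep_mul {n e : ℤ} {m m' : ℤ} (h : ∃ x y : ℤ, |x ^ 2 + n * x * y + e * y ^ 2| = m)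
    (h' : ∃ x y : ℤ, |x ^ 2 + n * x * y + e * y ^ 2| = m') :
    ∃ x y : ℤ, |x ^ 2 + n * x * y + e * y ^ 2| = m * m' := by
  obtain ⟨x, y, rfl⟩ := h
  obtain ⟨x', y', rfl⟩ := h'
  refine ⟨x * x' - e * y * y', x * y' + x' * y + n * y * y', ?_⟩
  rw [← abs_mul]
  congr 1
  ring

theorem rep_sq (n e s : ℤ) : ∃ x y : ℤ, |x ^ 2 + n * x * y + e * y ^ 2| = s ^ 2 :=
  ⟨s, 0, by simp⟩

theorem rep_pow {n e : ℤ} {m : ℤ} (h : ∃ x y : ℤ, |x ^ 2 + n * x * y + e * y ^ 2| = m) (k : ℕ) :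
    ∃ x y : ℤ, |x ^ 2 + n * x * y + e * y ^ 2| = m ^ k := by
  induction k with
  | zero => exact ⟨1, 0, by simp⟩
  | succ k ih => rw [pow_succ]; exact rep_mul ih h

theorem rep_of_divSum {n e : ℤ} (d : ℕ)
    (hsplit : ∀ p : ℕ, p.Prime → chi d p = 1 → ∃ x y : ℤ, |x ^ 2 + n * x * y + e * y ^ 2| = p)
    (m : ℕ) (hm : m.Coprime d) (h0 : divSum d m ≠ 0) :
    ∃ x y : ℤ, |x ^ 2 + n * x * y + e * y ^ 2| = m := by
  induction m using Nat.recOnPosPrimePosCoprime with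
  | prime_pow p k hp hk =>
    push_cast
    rcases chi_tri d p with h | h | h
    · exfalso
      rw [chi, jacobiSym.eq_zero_iff] at h
      apply h.2
      have := Nat.Coprime.coprime_dvd_left (dvd_pow_self p hk.ne') hm
      exact_mod_cast this
    · exact rep_pow (hsplit p hp h) k
    · rw [divSum_prime_pow d p k hp, h, neg_one_geom_sum] at h0
      split_ifs at h0 with hev
      · simp at h0
      · have : Even k := by
          rcases Nat.even_or_odd k with h | h
          · exact h
          · exact absurd h.add_one hev
        obtain ⟨r, rfl⟩ := this
        have h2 : (p : ℤ) ^ (r + r) = ((p : ℤ) ^ r) ^ 2 := by rw [← pow_mul]; congr 1; ring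
        rw [h2]
        exact rep_sq _ _ _
  | zero => simp [divSum] at h0
  | one => exact ⟨1, 0, by simp⟩
  | coprime a b _ _ hab iha ihb =>
    rw [divSum_mul d hab] at h0
    push_cast
    exact rep_mul (iha (Nat.Coprime.coprime_mul_right hm) (left_ne_zero_of_mul h0))
      (ihb (Nat.Coprime.coprime_mul_left hm) (right_ne_zero_of_mul h0))

/-- The arithmetic consequences of class number one. -/
structure Good (n d : ℕ) : Prop where
  hn : 3 ≤ n
  mod8 : d % 8 = 5
  le : d ≤ 2 * n ^ 2
  ram : ∀ p : ℕ, p.Prime → p ∣ d → n ≤ 2 * p ^ 2 + 2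
  red : ∀ m : ℕ, m.Coprime d → divSum d m ≠ 0 → IsSquare m ∨ IsRed n m

theorem good_of_classNumber {n : ℕ} {e : ℤ} (hn : 19 ≤ n) (he : e = 1 ∨ e = -1)
    (h1 : classNumber ((n : ℤ) ^ 2 - 4 * e) = 1) : ∃ d : ℕ, Good n d := by
  have hn3 : (3 : ℤ) ≤ n := by omega
  have hodd : Odd (n : ℤ) := by
    rcases Int.even_or_odd (n : ℤ) with h | h
    · have := even_small hn3 he h h1; omega
    · exact h
  have h8 := odd_disc he hodd
  have hpos : 0 ≤ (n : ℤ) ^ 2 - 4 * e := by rcases he with rfl | rfl <;> nlinarith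
  obtain ⟨d, hd⟩ := Int.eq_ofNat_of_zero_le hpos
  refine ⟨d, by omega, by omega, ?_, ?_, ?_⟩
  · have : (d : ℤ) ≤ 2 * (n : ℤ) ^ 2 := by rw [← hd]; rcases he with rfl | rfl <;> nlinarith
    exact_mod_cast this
  · intro p hp hpd
    have := ramified_large hn3 he hodd h1 p hp (by rw [hd]; exact_mod_cast hpd)
    have h3 : (n : ℤ) ≤ 2 * (p : ℤ) ^ 2 + 2 := by omega
    exact_mod_cast h3
  · intro m hm h0
    obtain ⟨x, y, hxy⟩ := rep_of_divSum d (fun p hp hc => split_rep hn3 he hodd h1 d hd.symm p hp hc)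
      m hm h0
    by_cases hg : |x ^ 2 + n * x * y + e * y ^ 2| = (Int.gcd x y : ℤ) ^ 2
    · left
      rw [hxy] at hg
      exact ⟨Int.gcd x y, by rw [← sq]; exact_mod_cast hg⟩
    · right
      rw [← hxy]
      exact isRed_of_norm hn3 he x y hg

end

section
open Filter Topology Finset

/-- Uniform bound for the sums of `f` over intervals. -/
def BddSum (f : ℕ → ℝ) (M : ℝ) : Prop := ∀ s t : ℕ, |∑ m ∈ Ioc s t, f m| ≤ M

/-- Partial sums of the Dirichlet series of `f`. -/
def psum (f : ℕ → ℝ) (β : ℝ) (X : ℕ) : ℝ := ∑ m ∈ Ioc 0 X, f m * (m : ℝ) ^ (-β)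

/-- The (conditionally convergent) value of the Dirichlet series. -/
def Lval (f : ℕ → ℝ) (β : ℝ) : ℝ := limUnder atTop (psum f β)

theorem abel_aux {f w : ℕ → ℝ} {M : ℝ} (hf : BddSum f M) (s : ℕ)
    (hw : ∀ k, s < k → w (k + 1) ≤ w k) (t : ℕ) (ht : s + 1 ≤ t) :
    |∑ m ∈ Ioc s t, f m * w m - (∑ m ∈ Ioc s t, f m) * w t| ≤ M * (w (s + 1) - w t) := by
  induction t, ht using Nat.le_induction with
  | base => simp
  | succ t ht ih =>
    have h1 : Ioc s (t + 1) = insert (t + 1) (Ioc s t) := by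
      ext x; simp; omega
    have h2 : (t + 1) ∉ Ioc s t := by simp
    rw [h1, sum_insert h2, sum_insert h2]
    have h3 := hf s t
    have h4 := hw t (by omega)
    have h5 : |(∑ m ∈ Ioc s t, f m) * (w t - w (t + 1))| ≤ M * (w t - w (t + 1)) := by
      rw [abs_mul, abs_of_nonneg (a := w t - w (t + 1)) (by linarith)]
      exact mul_le_mul_of_nonneg_right h3 (by linarith)
    have h6 : f (t + 1) * w (t + 1) + ∑ m ∈ Ioc s t, f m * w m -
        (f (t + 1) + ∑ m ∈ Ioc s t, f m) * w (t + 1) =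
        (∑ m ∈ Ioc s t, f m * w m - (∑ m ∈ Ioc s t, f m) * w t) +
        (∑ m ∈ Ioc s t, f m) * (w t - w (t + 1)) := by ring
    rw [h6]
    refine (abs_add_le _ _).trans ?_
    nlinarith

theorem BddSum.nonneg {f : ℕ → ℝ} {M : ℝ} (hf : BddSum f M) : 0 ≤ M :=
  (abs_nonneg _).trans (hf 0 0)

theorem abel {f : ℕ → ℝ} {M : ℝ} (hf : BddSum f M) {β : ℝ} (hβ : 0 ≤ β) (s t : ℕ) :
    |∑ m ∈ Ioc s t, f m * (m : ℝ) ^ (-β)| ≤ M * ((s + 1 : ℕ) : ℝ) ^ (-β) := by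
  rcases le_or_gt (s + 1) t with h | h
  · have h1 := abel_aux hf s (w := fun m => (m : ℝ) ^ (-β)) (by
      intro k hk
      apply Real.rpow_le_rpow_of_nonpos
      · have : 0 < k := by omega
        exact_mod_cast this
      · push_cast; linarith
      · linarith) t h
    have h2 := hf s t
    have h3 : (0 : ℝ) ≤ (t : ℝ) ^ (-β) := by positivity
    have h4 : |(∑ m ∈ Ioc s t, f m) * (t : ℝ) ^ (-β)| ≤ M * (t : ℝ) ^ (-β) := by
      rw [abs_mul, abs_of_nonneg h3]
      exact mul_le_mul_of_nonneg_right h2 h3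
    calc |∑ m ∈ Ioc s t, f m * (m : ℝ) ^ (-β)| = |(∑ m ∈ Ioc s t, f m * (m : ℝ) ^ (-β) -
          (∑ m ∈ Ioc s t, f m) * (t : ℝ) ^ (-β)) + (∑ m ∈ Ioc s t, f m) * (t : ℝ) ^ (-β)| := by
            congr 1; ring
      _ ≤ _ := abs_add_le _ _
      _ ≤ _ := add_le_add h1 h4
      _ = _ := by ring
  · rw [Ioc_eq_empty (by omega)]
    simp only [sum_empty, abs_zero]
    have := hf.nonneg
    positivity

theorem psum_sub (f : ℕ → ℝ) (β : ℝ) {s t : ℕ} (h : s ≤ t) :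
    psum f β t - psum f β s = ∑ m ∈ Ioc s t, f m * (m : ℝ) ^ (-β) := by
  rw [psum, psum, ← Finset.sum_Ioc_consecutive _ (Nat.zero_le s) h]; ring

theorem tendsto_rpow_nat {β : ℝ} (hβ : 0 < β) :
    Tendsto (fun N : ℕ => ((N + 1 : ℕ) : ℝ) ^ (-β)) atTop (𝓝 0) :=
  ((tendsto_rpow_neg_atTop hβ).comp tendsto_natCast_atTop_atTop).comp (tendsto_add_atTop_nat 1)

theorem psum_tendsto {f : ℕ → ℝ} {M : ℝ} (hf : BddSum f M) {β : ℝ} (hβ : 0 < β) :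
    Tendsto (psum f β) atTop (𝓝 (Lval f β)) := by
  have hc : CauchySeq (psum f β) := by
    refine cauchySeq_of_le_tendsto_0' (fun N => M * ((N + 1 : ℕ) : ℝ) ^ (-β)) ?_ ?_
    · intro s t hst
      rw [dist_comm, Real.dist_eq, psum_sub f β hst]
      exact abel hf hβ.le s t
    · simpa using (tendsto_rpow_nat hβ).const_mul M
  obtain ⟨L, hL⟩ := cauchySeq_tendsto_of_complete hc
  have : Lval f β = L := hL.limUnder_eq
  rwa [this]

theorem Lval_sub {f : ℕ → ℝ} {M : ℝ} (hf : BddSum f M) {β : ℝ} (hβ : 0 < β) (X : ℕ) :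
    |Lval f β - psum f β X| ≤ M * ((X + 1 : ℕ) : ℝ) ^ (-β) := by
  have h := ((psum_tendsto hf hβ).sub_const (psum f β X)).abs
  refine le_of_tendsto h ?_
  filter_upwards [eventually_ge_atTop X] with t ht
  rw [psum_sub f β ht]
  exact abel hf hβ.le X t

theorem Lval_abs_le {f : ℕ → ℝ} {M : ℝ} (hf : BddSum f M) {β : ℝ} (hβ : 0 < β) :
    |Lval f β| ≤ M := by
  have := Lval_sub hf hβ 0
  simpa [psum] using this

theorem Lval_continuousOn {f : ℕ → ℝ} {M : ℝ} (hf : BddSum f M) {β₀ : ℝ} (h0 : 0 < β₀) :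
    ContinuousOn (Lval f) (Set.Ici β₀) := by
  have hu : TendstoUniformlyOn (fun X β => psum f β X) (Lval f) atTop (Set.Ici β₀) := by
    rw [Metric.tendstoUniformlyOn_iff]
    intro ε hε
    have ht : Tendsto (fun N : ℕ => M * ((N + 1 : ℕ) : ℝ) ^ (-β₀)) atTop (𝓝 0) := by
      simpa using (tendsto_rpow_nat h0).const_mul M
    filter_upwards [ht.eventually (gt_mem_nhds hε)] with X hX β hβ
    rw [Real.dist_eq]
    refine (Lval_sub hf (lt_of_lt_of_le h0 hβ) X).trans_lt (lt_of_le_of_lt ?_ hX)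
    refine mul_le_mul_of_nonneg_left ?_ hf.nonneg
    apply Real.rpow_le_rpow_of_exponent_le
    · push_cast; linarith [Nat.cast_nonneg (α := ℝ) X]
    · have : β₀ ≤ β := hβ
      linarith
  refine hu.continuousOn (Frequently.of_forall fun X => ?_)
  apply Continuous.continuousOn
  unfold psum
  refine continuous_finsetSum _ fun m hm => ?_
  have : (m : ℝ) ≠ 0 := by
    have := (mem_Ioc.1 hm).1
    positivity
  exact continuous_const.mul ((Real.continuous_const_rpow this).comp continuous_neg)

theorem sum_antidiag (u v : ℕ → ℝ) (N : ℕ) :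
    ∑ m ∈ Ioc 0 N, ∑ x ∈ m.divisorsAntidiagonal, u x.1 * v x.2 =
      ∑ d ∈ Ioc 0 N, ∑ e ∈ Ioc 0 (N / d), u d * v e := by
  let U : ArithmeticFunction ℝ := ⟨fun m => if m = 0 then 0 else u m, by simp⟩
  let V : ArithmeticFunction ℝ := ⟨fun m => if m = 0 then 0 else v m, by simp⟩
  have h := ArithmeticFunction.sum_Ioc_mul_eq_sum_sum U V N
  have hU : ∀ m, m ≠ 0 → U m = u m := by intro m hm; simp [U, hm]
  have hV : ∀ m, m ≠ 0 → V m = v m := by intro m hm; simp [V, hm]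
  calc _ = ∑ m ∈ Ioc 0 N, (U * V) m := by
        refine sum_congr rfl fun m hm => ?_
        rw [ArithmeticFunction.mul_apply]
        refine sum_congr rfl fun x hx => ?_
        have := Nat.ne_zero_of_mem_divisorsAntidiagonal hx
        rw [hU _ this.1, hV _ this.2]
    _ = _ := h
    _ = _ := by
        refine sum_congr rfl fun d hd => ?_
        rw [mul_sum]
        refine sum_congr rfl fun e he => ?_
        rw [mem_Ioc] at hd he
        rw [hU _ (by omega), hV _ (by omega)]

theorem hyperbola_split (F : ℕ → ℕ → ℝ) (Y : ℕ) :
    ∑ d ∈ Ioc 0 (Y * Y), ∑ e ∈ Ioc 0 (Y * Y / d), F d e =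
      ∑ d ∈ Ioc 0 Y, ∑ e ∈ Ioc 0 (Y * Y / d), F d e +
      ∑ e ∈ Ioc 0 Y, ∑ d ∈ Ioc Y (Y * Y / e), F d e := by
  have hYY : Y ≤ Y * Y := Nat.le_mul_self Y
  rw [← Finset.sum_Ioc_consecutive _ (Nat.zero_le Y) hYY]
  congr 1
  apply Finset.sum_comm'
  intro d e
  simp only [mem_Ioc]
  constructor
  · rintro ⟨⟨h1, h2⟩, h3, h4⟩
    rw [Nat.le_div_iff_mul_le (by omega)] at h4
    refine ⟨⟨h1, ?_⟩, h3, ?_⟩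
    · rw [Nat.le_div_iff_mul_le h3]; linarith
    · by_contra hc
      push Not at hc
      nlinarith
  · rintro ⟨⟨h1, h2⟩, h3, h4⟩
    rw [Nat.le_div_iff_mul_le (by omega)] at h2
    refine ⟨⟨h1, ?_⟩, h3, ?_⟩
    · nlinarith
    · rw [Nat.le_div_iff_mul_le (by omega)]; linarith

theorem sum_rpow_half (Y : ℕ) : ∑ e ∈ Ioc 0 Y, (e : ℝ) ^ (-(1 / 2) : ℝ) ≤ 2 * (Y : ℝ) ^ (1 / 2 : ℝ) := by
  induction Y with
  | zero => simp
  | succ Y ih =>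
    rw [← Finset.insert_Ioc_right_eq_Ioc_add_one (by omega), sum_insert (by simp)]
    have hY : (0 : ℝ) < ((Y + 1 : ℕ) : ℝ) := by positivity
    rw [Real.rpow_neg hY.le, ← Real.sqrt_eq_rpow]
    rw [← Real.sqrt_eq_rpow] at ih
    set a := Real.sqrt ((Y + 1 : ℕ) : ℝ) with ha
    set b := Real.sqrt (Y : ℝ) with hb
    have ha2 : a * a = Y + 1 := by rw [ha, Real.mul_self_sqrt hY.le]; push_cast; ring
    have hb2 : b * b = Y := Real.mul_self_sqrt (by positivity)
    have ha0 : 0 < a := Real.sqrt_pos.2 hY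
    have hb0 : 0 ≤ b := Real.sqrt_nonneg _
    have : a⁻¹ ≤ 2 * a - 2 * b := by
      rw [inv_le_iff_one_le_mul₀ ha0]
      nlinarith [sq_nonneg (a - b)]
    linarith

theorem hyperbola {f g : ℕ → ℝ} {Mf Mg β : ℝ} (hf : BddSum f Mf) (hg : BddSum g Mg)
    (hMf : 1 ≤ Mf) (hMg : 1 ≤ Mg) (hf1 : ∀ m, |f m| ≤ 1) (hg1 : ∀ m, |g m| ≤ 1)
    (hβ : 3 / 4 ≤ β) (Y : ℕ) (hY : 1 ≤ Y) :
    |∑ m ∈ Ioc 0 (Y * Y), (∑ x ∈ m.divisorsAntidiagonal, f x.1 * g x.2) * (m : ℝ) ^ (-β)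
      - Lval f β * Lval g β| ≤ 4 * Mf * Mg * (Y : ℝ) ^ (-(1 / 4) : ℝ) := by
  have hβ0 : 0 < β := by linarith
  have hY1 : (1 : ℝ) ≤ Y := by exact_mod_cast hY
  have hY0 : (0 : ℝ) < Y := by linarith
  set Z : ℝ := (Y : ℝ) ^ (-(1 / 4) : ℝ) with hZ
  have hZ0 : 0 ≤ Z := by positivity
  have e1 : ∑ m ∈ Ioc 0 (Y * Y), (∑ x ∈ m.divisorsAntidiagonal, f x.1 * g x.2) * (m : ℝ) ^ (-β) =
      ∑ d ∈ Ioc 0 Y, (f d * (d : ℝ) ^ (-β)) * psum g β (Y * Y / d) +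
      ∑ e ∈ Ioc 0 Y, (g e * (e : ℝ) ^ (-β)) * ∑ d ∈ Ioc Y (Y * Y / e), f d * (d : ℝ) ^ (-β) := by
    have h := sum_antidiag (fun d => f d * (d : ℝ) ^ (-β)) (fun d => g d * (d : ℝ) ^ (-β)) (Y * Y)
    rw [hyperbola_split] at h
    calc _ = ∑ m ∈ Ioc 0 (Y * Y), ∑ x ∈ m.divisorsAntidiagonal,
          (fun d : ℕ => f d * (d : ℝ) ^ (-β)) x.1 * (fun d : ℕ => g d * (d : ℝ) ^ (-β)) x.2 := by
          refine sum_congr rfl fun m hm => ?_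
          rw [sum_mul]
          refine sum_congr rfl fun x hx => ?_
          have : x.1 * x.2 = m := (Nat.mem_divisorsAntidiagonal.1 hx).1
          rw [← this, Nat.cast_mul, Real.mul_rpow (by positivity) (by positivity)]
          ring
      _ = _ := h
      _ = _ := by
          congr 1
          · refine sum_congr rfl fun d _ => ?_
            rw [psum, mul_sum]
          · refine sum_congr rfl fun d _ => ?_
            rw [mul_sum]
            refine sum_congr rfl fun e _ => ?_
            ring
  -- first error
  have b1 : |∑ d ∈ Ioc 0 Y, (f d * (d : ℝ) ^ (-β)) * (psum g β (Y * Y / d) - Lval g β)| ≤ Mg * Z := by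
    have : ∀ d ∈ Ioc 0 Y, |(f d * (d : ℝ) ^ (-β)) * (psum g β (Y * Y / d) - Lval g β)| ≤
        Mg * (Y * Y : ℝ) ^ (-β) := by
      intro d hd
      have hd0 : 0 < d := (mem_Ioc.1 hd).1
      have hdR : (0 : ℝ) < d := by exact_mod_cast hd0
      have h1 : |psum g β (Y * Y / d) - Lval g β| ≤ Mg * ((Y * Y : ℝ) / d) ^ (-β) := by
        rw [abs_sub_comm]
        refine (Lval_sub hg hβ0 _).trans ?_
        refine mul_le_mul_of_nonneg_left ?_ (by linarith)
        apply Real.rpow_le_rpow_of_nonpos (by positivity) _ (by linarith)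
        have := Nat.lt_div_mul_add (a := Y * Y) hd0
        rw [div_le_iff₀ hdR]
        have h2 : Y * Y ≤ (Y * Y / d + 1) * d := by nlinarith
        exact_mod_cast h2
      rw [abs_mul, abs_mul]
      have h3 : |(d : ℝ) ^ (-β)| = (d : ℝ) ^ (-β) := abs_of_nonneg (by positivity)
      rw [h3]
      have h4 : (d : ℝ) ^ (-β) * ((Y * Y : ℝ) / d) ^ (-β) = (Y * Y : ℝ) ^ (-β) := by
        rw [← Real.mul_rpow (by positivity) (by positivity)]
        congr 1
        field_simp
      have h5 : (0 : ℝ) ≤ (d : ℝ) ^ (-β) := by positivity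
      calc |f d| * (d : ℝ) ^ (-β) * |psum g β (Y * Y / d) - Lval g β|
          ≤ 1 * (d : ℝ) ^ (-β) * (Mg * ((Y * Y : ℝ) / d) ^ (-β)) := by
            gcongr
            exact hf1 d
        _ = _ := by rw [← h4]; ring
    refine (abs_sum_le_sum_abs _ _).trans ((sum_le_sum this).trans ?_)
    rw [sum_const, Nat.card_Ioc, nsmul_eq_mul]
    have h6 : ((Y - 0 : ℕ) : ℝ) * (Y * Y : ℝ) ^ (-β) ≤ Z := by
      rw [Nat.sub_zero, Real.mul_rpow hY0.le hY0.le, ← Real.rpow_add hY0]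
      nth_rewrite 1 [← Real.rpow_one (Y : ℝ)]
      rw [← Real.rpow_add hY0]
      apply Real.rpow_le_rpow_of_exponent_le hY1
      linarith
    nlinarith
  have b2 : |∑ e ∈ Ioc 0 Y, (g e * (e : ℝ) ^ (-β)) * ∑ d ∈ Ioc Y (Y * Y / e), f d * (d : ℝ) ^ (-β)| ≤
      2 * Mf * Z := by
    have : ∀ e ∈ Ioc 0 Y, |(g e * (e : ℝ) ^ (-β)) * ∑ d ∈ Ioc Y (Y * Y / e), f d * (d : ℝ) ^ (-β)| ≤
        (e : ℝ) ^ (-(1 / 2) : ℝ) * (Mf * (Y : ℝ) ^ (-β)) := by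
      intro e he
      have he0 : 0 < e := (mem_Ioc.1 he).1
      have heR : (1 : ℝ) ≤ e := by exact_mod_cast he0
      rw [abs_mul]
      gcongr
      · rw [abs_mul, abs_of_nonneg (a := (e : ℝ) ^ (-β)) (by positivity)]
        have h1 : (e : ℝ) ^ (-β) ≤ (e : ℝ) ^ (-(1 / 2) : ℝ) :=
          Real.rpow_le_rpow_of_exponent_le heR (by linarith)
        calc |g e| * (e : ℝ) ^ (-β) ≤ 1 * (e : ℝ) ^ (-(1 / 2) : ℝ) := by
              gcongr
              exact hg1 e
          _ = _ := one_mul _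
      · refine (abel hf hβ0.le _ _).trans ?_
        refine mul_le_mul_of_nonneg_left ?_ (by linarith)
        apply Real.rpow_le_rpow_of_nonpos hY0 _ (by linarith)
        push_cast; linarith
    refine (abs_sum_le_sum_abs _ _).trans ((sum_le_sum this).trans ?_)
    rw [← sum_mul]
    have h1 := sum_rpow_half Y
    have h2 : (Y : ℝ) ^ (1 / 2 : ℝ) * (Y : ℝ) ^ (-β) ≤ Z := by
      rw [← Real.rpow_add hY0]
      exact Real.rpow_le_rpow_of_exponent_le hY1 (by linarith)
    have h3 : (0 : ℝ) ≤ (Y : ℝ) ^ (-β) := by positivity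
    calc (∑ e ∈ Ioc 0 Y, (e : ℝ) ^ (-(1 / 2) : ℝ)) * (Mf * (Y : ℝ) ^ (-β))
        ≤ (2 * (Y : ℝ) ^ (1 / 2 : ℝ)) * (Mf * (Y : ℝ) ^ (-β)) := by gcongr
      _ = 2 * Mf * ((Y : ℝ) ^ (1 / 2 : ℝ) * (Y : ℝ) ^ (-β)) := by ring
      _ ≤ _ := by gcongr
  have b3 : |(psum f β Y - Lval f β) * Lval g β| ≤ Mf * Mg * Z := by
    rw [abs_mul, abs_sub_comm]
    have h1 := Lval_sub hf hβ0 Y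
    have h2 := Lval_abs_le hg hβ0
    have h3 : ((Y + 1 : ℕ) : ℝ) ^ (-β) ≤ Z := by
      refine (Real.rpow_le_rpow_of_nonpos hY0 (by push_cast; linarith) (by linarith)).trans ?_
      exact Real.rpow_le_rpow_of_exponent_le hY1 (by linarith)
    calc _ ≤ (Mf * Z) * Mg := by
          gcongr
          exact h1.trans (by gcongr)
      _ = _ := by ring
  have e2 : ∑ d ∈ Ioc 0 Y, (f d * (d : ℝ) ^ (-β)) * psum g β (Y * Y / d) =
      ∑ d ∈ Ioc 0 Y, (f d * (d : ℝ) ^ (-β)) * (psum g β (Y * Y / d) - Lval g β) +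
        psum f β Y * Lval g β := by
    rw [psum, sum_mul, ← sum_add_distrib]
    refine sum_congr rfl fun d _ => ?_
    ring
  rw [e1, e2]
  set A := ∑ d ∈ Ioc 0 Y, (f d * (d : ℝ) ^ (-β)) * (psum g β (Y * Y / d) - Lval g β)
  set B := ∑ e ∈ Ioc 0 Y, (g e * (e : ℝ) ^ (-β)) * ∑ d ∈ Ioc Y (Y * Y / e), f d * (d : ℝ) ^ (-β)
  have e3 : A + psum f β Y * Lval g β + B - Lval f β * Lval g β =
      A + B + (psum f β Y - Lval f β) * Lval g β := by ring
  rw [e3]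
  have t1 := abs_add_le (A + B) ((psum f β Y - Lval f β) * Lval g β)
  have t2 := abs_add_le A B
  have t3 : Mg * Z ≤ Mf * Mg * Z := by
    have := mul_nonneg (show 0 ≤ Mg by linarith) hZ0
    nlinarith
  have t4 : Mf * Z ≤ Mf * Mg * Z := by
    have := mul_nonneg (show 0 ≤ Mf by linarith) hZ0
    nlinarith
  linarith

end

section
open Filter Topology Finset

theorem bddSum_of_periodic {f : ℕ → ℝ} {q : ℕ} (hq : 0 < q) (hper : ∀ m, f (m + q) = f m)
    (h0 : ∑ m ∈ range q, f m = 0) (h1 : ∀ m, |f m| ≤ 1) : BddSum f (2 * q) := by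
  have hS : ∀ k, |∑ m ∈ range k, f m| ≤ q := by
    intro k
    induction k using Nat.strong_induction_on with
    | _ k ih =>
      rcases lt_or_ge k q with h | h
      · refine (abs_sum_le_sum_abs _ _).trans ((sum_le_sum fun m _ => h1 m).trans ?_)
        simp
        exact_mod_cast h.le
      · obtain ⟨j, rfl⟩ := Nat.exists_eq_add_of_le h
        rw [sum_range_add, h0, zero_add]
        have : ∑ x ∈ range j, f (q + x) = ∑ x ∈ range j, f x :=
          sum_congr rfl fun x _ => by rw [add_comm, hper]
        rw [this]
        exact ih j (by omega)
  intro s t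
  rcases le_or_gt s t with h | h
  · have e : ∑ m ∈ Ioc s t, f m = ∑ m ∈ range (t + 1), f m - ∑ m ∈ range (s + 1), f m := by
      have := Finset.sum_Ico_eq_sub f (show s + 1 ≤ t + 1 by omega)
      rw [← this]
      congr 1
      ext x; simp only [mem_Ioc, mem_Ico]; omega
    rw [e]
    have := abs_sub (∑ m ∈ range (t + 1), f m) (∑ m ∈ range (s + 1), f m)
    linarith [hS (t + 1), hS (s + 1)]
  · rw [Ioc_eq_empty (by omega)]
    simp

theorem sum_zero_of_mul {f : ℕ → ℝ} {q a : ℕ} (hq : 0 < q) (ha : a.Coprime q)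
    (hper : ∀ m, f (m % q) = f m) (hf : ∀ m, f (a * m) = -f m) :
    ∑ m ∈ range q, f m = 0 := by
  have h : ∑ m ∈ range q, f (a * m) = ∑ m ∈ range q, f m := by
    refine Finset.sum_nbij' (fun m => (a * m) % q)
      (fun m => ((ZMod.unitOfCoprime a ha)⁻¹ * (m : ZMod q) : ZMod q).val) ?_ ?_ ?_ ?_ ?_
    · intro m _; simp [Nat.mod_lt _ hq]
    · intro m _
      have : NeZero q := ⟨hq.ne'⟩
      simp [ZMod.val_lt]
    · intro m hm
      have : NeZero q := ⟨hq.ne'⟩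
      have : (((a * m % q : ℕ)) : ZMod q) = (ZMod.unitOfCoprime a ha : ZMod q) * m := by simp
      rw [this, ← mul_assoc, Units.inv_mul, one_mul, ZMod.val_natCast,
        Nat.mod_eq_of_lt (mem_range.1 hm)]
    · intro m hm
      have : NeZero q := ⟨hq.ne'⟩
      rw [← Nat.mod_eq_of_lt (mem_range.1 hm), ← ZMod.val_natCast, ← ZMod.val_natCast]
      congr 1
      push_cast
      rw [ZMod.natCast_zmod_val, ← ZMod.coe_unitOfCoprime a ha, ← mul_assoc, Units.mul_inv,
        one_mul]
      simp
    · intro m _; rw [hper]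
  simp only [hf, sum_neg_distrib] at h
  linarith

/-- The real-valued quadratic character. -/
def chiR (d m : ℕ) : ℝ := (chi d m : ℝ)

/-- Indicator of coprimality. -/
def cop (d m : ℕ) : ℝ := if m.Coprime d then 1 else 0

/-- Alternating signs. -/
def alt (m : ℕ) : ℝ := (-1) ^ (m + 1)

theorem chiR_mod (d m : ℕ) : chiR d (m % d) = chiR d m := by
  simp only [chiR, chi]
  congr 1
  rw [Int.natCast_mod, ← jacobiSym.mod_left]

theorem cop_mod (d m : ℕ) : cop d (m % d) = cop d m := by
  simp [cop, Nat.coprime_iff_gcd_eq_one]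

theorem chiR_congr {d a b : ℕ} (h : a % d = b % d) : chiR d a = chiR d b := by
  rw [← chiR_mod d a, h, chiR_mod]

theorem cop_congr {d a b : ℕ} (h : a % d = b % d) : cop d a = cop d b := by
  rw [← cop_mod d a, h, cop_mod]

theorem chiR_mul (d a b : ℕ) : chiR d (a * b) = chiR d a * chiR d b := by
  simp [chiR, chi_mul]

theorem cop_mul (d a b : ℕ) : cop d (a * b) = cop d a * cop d b := by
  simp only [cop, Nat.coprime_mul_iff_left]
  split_ifs <;> simp_all

theorem chiR_abs (d m : ℕ) : |chiR d m| ≤ 1 := by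
  rcases chi_tri d m with h | h | h <;> simp [chiR, h]

theorem cop_abs (d m : ℕ) : |cop d m| ≤ 1 := by
  unfold cop; split_ifs <;> simp

theorem cop_nonneg (d m : ℕ) : 0 ≤ cop d m := by
  unfold cop; split_ifs <;> simp

theorem alt_abs (m : ℕ) : |alt m| ≤ 1 := by simp [alt]

theorem abs_mul_le_one {a b : ℝ} (ha : |a| ≤ 1) (hb : |b| ≤ 1) : |a * b| ≤ 1 := by
  rw [abs_mul]; exact mul_le_one₀ ha (abs_nonneg _) hb

theorem chiR_two {d : ℕ} (h : d % 8 = 5) : chiR d 2 = -1 := by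
  have h2 : Odd d := by rw [Nat.odd_iff]; omega
  have : chi d 2 = -1 := by
    unfold chi
    have := jacobiSym.at_two h2
    push_cast
    rw [this, ZMod.χ₈_nat_mod_eight, h]
    rfl
  simp [chiR, this]

theorem chiR_one (d : ℕ) : chiR d 1 = 1 := by simp [chiR, chi_one]
theorem cop_one (d : ℕ) : cop d 1 = 1 := by simp [cop]

theorem bdd_chi {d : ℕ} (h : d % 8 = 5) : BddSum (chiR d) (2 * d) := by
  have h0 : 0 < d := by omega
  apply bddSum_of_periodic h0
  · intro m; exact chiR_congr (by simp)
  · apply sum_zero_of_mul (a := 2) h0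
    · rw [Nat.coprime_two_left]; rw [Nat.odd_iff]; omega
    · exact chiR_mod d
    · intro m; rw [chiR_mul, chiR_two h]; ring
  · exact chiR_abs d

theorem bdd_alt {d : ℕ} (h : d % 8 = 5) : BddSum (fun m => alt m * cop d m) (4 * d) := by
  have h0 : 0 < d := by omega
  have hodd : Odd d := by rw [Nat.odd_iff]; omega
  have anti : ∀ m, alt (m + d) * cop d (m + d) = -(alt m * cop d m) := by
    intro m
    rw [cop_congr (show (m + d) % d = m % d by simp)]
    have : alt (m + d) = - alt m := by
      unfold alt
      rw [show m + d + 1 = (m + 1) + d by ring, pow_add, hodd.neg_one_pow]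
      ring
    rw [this]; ring
  have := bddSum_of_periodic (f := fun m => alt m * cop d m) (q := d + d) (by omega) ?_ ?_ ?_
  · convert this using 1
    push_cast; ring
  · intro m
    rw [← add_assoc, anti, anti, neg_neg]
  · rw [sum_range_add]
    have : ∑ x ∈ range d, (alt (d + x) * cop d (d + x)) = - ∑ x ∈ range d, alt x * cop d x := by
      rw [← sum_neg_distrib]
      refine sum_congr rfl fun x _ => ?_
      rw [add_comm d x, anti]
    rw [this]; ring
  · intro m
    exact abs_mul_le_one (alt_abs _) (cop_abs _ _)

theorem exists_crt {d1 d2 : ℕ} (h : d1.Coprime d2) (ho : Odd d1) :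
    ∃ a : ℕ, a.Coprime (d1 * d2) ∧ a % d1 = 2 % d1 ∧ a % d2 = 1 % d2 := by
  obtain ⟨a, h1, h2⟩ := Nat.chineseRemainder h 2 1
  refine ⟨a, ?_, h1, h2⟩
  rw [Nat.coprime_mul_iff_right]
  constructor
  · have := h1.gcd_eq
    rw [Nat.Coprime, this]
    exact Nat.coprime_two_left.2 ho
  · have := h2.gcd_eq
    rw [Nat.Coprime, this]
    simp

theorem bdd_chicop {d1 d2 : ℕ} (h : d1 % 8 = 5) (h2 : 0 < d2) (hc : d1.Coprime d2) :
    BddSum (fun m => chiR d1 m * cop d2 m) (2 * (d1 * d2 : ℕ)) := by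
  have h0 : 0 < d1 * d2 := Nat.mul_pos (by omega) h2
  obtain ⟨a, ha, ha1, ha2⟩ := exists_crt hc (by rw [Nat.odd_iff]; omega)
  apply bddSum_of_periodic h0
  · intro m
    rw [chiR_congr (d := d1) (show (m + d1 * d2) % d1 = m % d1 by simp),
      cop_congr (d := d2) (show (m + d1 * d2) % d2 = m % d2 by simp)]
  · apply sum_zero_of_mul (a := a) h0 ha
    · intro m
      rw [chiR_congr (d := d1) (show (m % (d1 * d2)) % d1 = m % d1 by simp),
        cop_congr (d := d2) (show (m % (d1 * d2)) % d2 = m % d2 by simp)]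
    · intro m
      rw [chiR_mul, cop_mul, chiR_congr ha1, cop_congr ha2, chiR_two h, cop_one]; ring
  · intro m
    exact abs_mul_le_one (chiR_abs _ _) (cop_abs _ _)

theorem bdd_chichi {d1 d2 : ℕ} (h : d1 % 8 = 5) (h2 : 0 < d2) (hc : d1.Coprime d2) :
    BddSum (fun m => chiR d1 m * chiR d2 m) (2 * (d1 * d2 : ℕ)) := by
  have h0 : 0 < d1 * d2 := Nat.mul_pos (by omega) h2
  obtain ⟨a, ha, ha1, ha2⟩ := exists_crt hc (by rw [Nat.odd_iff]; omega)
  apply bddSum_of_periodic h0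
  · intro m
    rw [chiR_congr (d := d1) (show (m + d1 * d2) % d1 = m % d1 by simp),
      chiR_congr (d := d2) (show (m + d1 * d2) % d2 = m % d2 by simp)]
  · apply sum_zero_of_mul (a := a) h0 ha
    · intro m
      rw [chiR_congr (d := d1) (show (m % (d1 * d2)) % d1 = m % d1 by simp),
        chiR_congr (d := d2) (show (m % (d1 * d2)) % d2 = m % d2 by simp)]
    · intro m
      rw [chiR_mul, chiR_mul, chiR_congr ha1, chiR_congr ha2, chiR_two h, chiR_one]; ring
  · intro m
    exact abs_mul_le_one (chiR_abs _ _) (chiR_abs _ _)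

/-- Indicator of being divisible by no element of `S`. -/
def sieve (S : Finset ℕ) (m : ℕ) : ℝ := if ∀ p ∈ S, ¬ p ∣ m then 1 else 0

theorem cop_eq_sieve {d : ℕ} (hd : d ≠ 0) (m : ℕ) : cop d m = sieve d.primeFactors m := by
  unfold cop sieve
  congr 1
  rw [eq_iff_iff, Nat.coprime_comm]
  constructor
  · intro h p hp hpm
    have := Nat.prime_of_mem_primeFactors hp
    have hpd := Nat.dvd_of_mem_primeFactors hp
    exact this.one_lt.ne' (Nat.dvd_one.1 (h ▸ Nat.dvd_gcd hpd hpm))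
  · intro h
    apply Nat.coprime_of_dvd
    intro p hp hpd hpm
    exact h p (Nat.mem_primeFactors.2 ⟨hp, hpd, hd⟩) hpm

theorem sum_multiples (F : ℕ → ℝ) (p : ℕ) (hp : 0 < p) (X : ℕ) :
    ∑ m ∈ Ioc 0 X, (if p ∣ m then F m else 0) = ∑ k ∈ Ioc 0 (X / p), F (p * k) := by
  rw [← sum_filter]
  symm
  refine Finset.sum_nbij (fun k => p * k) ?_ ?_ ?_ ?_
  · intro k hk
    simp only [mem_Ioc, mem_filter] at hk ⊢
    rw [Nat.le_div_iff_mul_le hp] at hk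
    exact ⟨⟨Nat.mul_pos hp hk.1, by linarith⟩, Dvd.intro _ rfl⟩
  · intro a _ b _ hab
    exact Nat.eq_of_mul_eq_mul_left hp hab
  · intro m hm
    simp only [coe_filter, mem_Ioc, Set.mem_ofPred_eq] at hm
    obtain ⟨⟨h1, h2⟩, k, rfl⟩ := hm
    refine ⟨k, ?_, rfl⟩
    simp only [coe_Ioc, Set.mem_Ioc]
    rw [Nat.le_div_iff_mul_le hp]
    exact ⟨Nat.pos_of_mul_pos_left h1, by linarith⟩
  · intro k _; rfl

theorem sieve_removal {f : ℕ → ℝ} {β : ℝ} (hβ : 0 < β) (S : Finset ℕ)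
    (hS : ∀ p ∈ S, p.Prime ∧ |f p| ≤ 1 ∧ ∀ m, f (p * m) = f p * f m) {L : ℝ}
    (hL : Tendsto (psum f β) atTop (𝓝 L)) :
    ∃ c : ℝ, 0 ≤ c ∧ Tendsto (psum (fun m => f m * sieve S m) β) atTop (𝓝 (c * L)) := by
  induction S using Finset.induction_on with
  | empty => exact ⟨1, zero_le_one, by simpa [sieve] using hL⟩
  | insert p S hpS ih =>
    obtain ⟨c, hc, ih⟩ := ih (fun q hq => hS q (mem_insert_of_mem hq))
    obtain ⟨hp, hfp, hmul⟩ := hS p (mem_insert_self _ _)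
    have hp1 : (1 : ℝ) ≤ p := by exact_mod_cast hp.one_lt.le
    refine ⟨(1 - f p * (p : ℝ) ^ (-β)) * c, ?_, ?_⟩
    · refine mul_nonneg ?_ hc
      have h1 : (p : ℝ) ^ (-β) ≤ 1 := Real.rpow_le_one_of_one_le_of_nonpos hp1 (by linarith)
      have h2 : (0 : ℝ) ≤ (p : ℝ) ^ (-β) := by positivity
      have := abs_le.1 hfp
      nlinarith
    · have key : ∀ X, psum (fun m => f m * sieve (insert p S) m) β X =
          psum (fun m => f m * sieve S m) β X -
            f p * (p : ℝ) ^ (-β) * psum (fun m => f m * sieve S m) β (X / p) := by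
        intro X
        have h1 := sum_multiples (fun m => f m * sieve S m * (m : ℝ) ^ (-β)) p hp.pos X
        have h2 : ∑ k ∈ Ioc 0 (X / p), f (p * k) * sieve S (p * k) * ((p * k : ℕ) : ℝ) ^ (-β) =
            f p * (p : ℝ) ^ (-β) * psum (fun m => f m * sieve S m) β (X / p) := by
          rw [psum, mul_sum]
          refine sum_congr rfl fun k _ => ?_
          have h3 : sieve S (p * k) = sieve S k := by
            unfold sieve
            congr 1
            rw [eq_iff_iff]
            refine forall_congr' fun q => forall_congr' fun hq => not_congr ?_
            have hqp := (hS q (mem_insert_of_mem hq)).1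
            rw [hqp.dvd_mul, Nat.prime_dvd_prime_iff_eq hqp hp]
            constructor
            · rintro (h | h)
              · subst h; exact absurd hq hpS
              · exact h
            · exact Or.inr
          rw [h3, hmul, Nat.cast_mul, Real.mul_rpow (by positivity) (by positivity)]
          ring
        rw [← h2, ← h1, psum, psum, ← sum_sub_distrib]
        refine sum_congr rfl fun m _ => ?_
        unfold sieve
        by_cases hpm : p ∣ m <;> simp [hpm]
      rw [show psum (fun m => f m * sieve (insert p S) m) β = _ from funext key]
      have ht : Tendsto (fun X => X / p) atTop (atTop : Filter ℕ) := Nat.tendsto_div_const_atTop hp.ne_zero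
      have := ih.sub ((ih.comp ht).const_mul (f p * (p : ℝ) ^ (-β)))
      have e : (1 - f p * (p : ℝ) ^ (-β)) * c * L = c * L - f p * (p : ℝ) ^ (-β) * (c * L) := by
        ring
      rw [e]
      exact this

theorem cop_removal {f : ℕ → ℝ} {β : ℝ} (hβ : 0 < β) {d : ℕ} (hd : d ≠ 0)
    (hS : ∀ p, p.Prime → p ∣ d → |f p| ≤ 1 ∧ ∀ m, f (p * m) = f p * f m) {L : ℝ}
    (hL : Tendsto (psum f β) atTop (𝓝 L)) :
    ∃ c : ℝ, 0 ≤ c ∧ Lval (fun m => f m * cop d m) β = c * L := by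
  obtain ⟨c, hc, h⟩ := sieve_removal hβ d.primeFactors (fun p hp =>
    ⟨Nat.prime_of_mem_primeFactors hp, hS p (Nat.prime_of_mem_primeFactors hp)
      (Nat.dvd_of_mem_primeFactors hp)⟩) hL
  refine ⟨c, hc, ?_⟩
  simp only [← cop_eq_sieve hd] at h
  exact h.limUnder_eq

end

section
open Filter Topology Finset

theorem prime_pow_bound (k : ℕ) (hk : 0 < k) (p a : ℕ) (hp : 2 ≤ p) :
    ((a + 1 : ℕ) : ℝ) ≤ (if p < 2 ^ k then (2 * k : ℝ) else 1) * ((p : ℝ) ^ a) ^ (1 / k : ℝ) := by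
  have hkR : (0 : ℝ) < k := by exact_mod_cast hk
  have hpR : (2 : ℝ) ≤ p := by exact_mod_cast hp
  have e : ((p : ℝ) ^ a) ^ (1 / k : ℝ) = ((p : ℝ) ^ (1 / k : ℝ)) ^ a := by
    rw [← Real.rpow_natCast, ← Real.rpow_natCast, ← Real.rpow_mul (by positivity),
      ← Real.rpow_mul (by positivity), mul_comm]
  rw [e]
  split_ifs with h
  · have h1 : 1 + 1 / (2 * k : ℝ) ≤ (p : ℝ) ^ (1 / k : ℝ) := by
      have h2 : (2 : ℝ) ^ (1 / k : ℝ) ≤ (p : ℝ) ^ (1 / k : ℝ) :=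
        Real.rpow_le_rpow (by norm_num) hpR (by positivity)
      refine le_trans ?_ h2
      rw [Real.rpow_def_of_pos (by norm_num)]
      have h3 := Real.add_one_le_exp (Real.log 2 * (1 / k))
      have h4 := Real.log_two_gt_d9
      have h5 : 1 / (2 * k : ℝ) ≤ Real.log 2 * (1 / k) := by
        rw [show 1 / (2 * k : ℝ) = (1 / 2) * (1 / k) by field_simp]
        gcongr
        linarith
      linarith
    have h6 := one_add_mul_le_pow (a := 1 / (2 * k : ℝ)) (by
      have : 0 ≤ 1 / (2 * k : ℝ) := by positivity
      linarith) a
    have h7 : (1 + 1 / (2 * k : ℝ)) ^ a ≤ ((p : ℝ) ^ (1 / k : ℝ)) ^ a := by gcongr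
    have h8 : (2 * k : ℝ) * (1 + a * (1 / (2 * k))) = 2 * k + a := by field_simp
    have h9 : (1 : ℝ) ≤ k := by exact_mod_cast hk
    have h10 : (2 * k : ℝ) * (1 + a * (1 / (2 * k))) ≤ 2 * k * ((p : ℝ) ^ (1 / k : ℝ)) ^ a := by
      gcongr
      exact h6.trans h7
    push_cast
    linarith
  · push Not at h
    have hR : (2 : ℝ) ^ k ≤ p := by exact_mod_cast h
    have h1 : (2 : ℝ) ≤ (p : ℝ) ^ (1 / k : ℝ) := by
      calc (2 : ℝ) = ((2 : ℝ) ^ k) ^ (1 / k : ℝ) := by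
            rw [← Real.rpow_natCast, ← Real.rpow_mul (by norm_num)]
            rw [mul_one_div_cancel hkR.ne', Real.rpow_one]
        _ ≤ _ := Real.rpow_le_rpow (by positivity) hR (by positivity)
    rw [one_mul]
    have h2 : ((a + 1 : ℕ) : ℝ) ≤ 2 ^ a := by
      have := Nat.lt_two_pow_self (n := a)
      exact_mod_cast this
    exact h2.trans (by gcongr)

theorem divisor_bound (k : ℕ) (hk : 0 < k) :
    ∃ C : ℝ, 1 ≤ C ∧ ∀ m : ℕ, m ≠ 0 → ((#m.divisors : ℕ) : ℝ) ≤ C * (m : ℝ) ^ (1 / k : ℝ) := by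
  have hk1 : (1 : ℝ) ≤ 2 * k := by
    have : (1 : ℝ) ≤ k := by exact_mod_cast hk
    linarith
  refine ⟨(2 * k : ℝ) ^ (2 ^ k), one_le_pow₀ hk1, fun m hm => ?_⟩
  rw [Nat.card_divisors hm]
  have h1 : ((∏ p ∈ m.primeFactors, (m.factorization p + 1) : ℕ) : ℝ) ≤
      ∏ p ∈ m.primeFactors, ((if p < 2 ^ k then (2 * k : ℝ) else 1) *
        ((p : ℝ) ^ (m.factorization p)) ^ (1 / k : ℝ)) := by
    rw [Nat.cast_prod]
    apply Finset.prod_le_prod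
    · intro p _; positivity
    · intro p hp
      exact prime_pow_bound k hk p _ (Nat.prime_of_mem_primeFactors hp).two_le
  refine h1.trans ?_
  rw [prod_mul_distrib, Real.finsetProd_rpow _ _ (fun p _ => by positivity)]
  have h2 : ∏ p ∈ m.primeFactors, ((p : ℝ) ^ (m.factorization p)) = m := by
    have := Nat.prod_factorization_pow_eq_self hm
    conv_rhs => rw [← this]
    rw [Finsupp.prod, Nat.support_factorization]
    push_cast
    rfl
  rw [h2]
  gcongr
  rw [prod_ite, prod_const, prod_const, one_pow, mul_one]
  apply pow_le_pow_right₀ hk1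
  calc #(m.primeFactors.filter (fun p => p < 2 ^ k)) ≤ #(range (2 ^ k)) := by
        apply card_le_card
        intro p hp
        simp only [mem_filter] at hp
        exact mem_range.2 hp.2
    _ = _ := card_range _

theorem divSum_le (d m : ℕ) : ((divSum d m : ℤ) : ℝ) ≤ (#m.divisors : ℕ) := by
  have : divSum d m ≤ (#m.divisors : ℕ) := by
    unfold divSum
    refine (sum_le_sum (g := fun _ => (1 : ℤ)) fun t _ => ?_).trans ?_
    · rcases chi_tri d t with h | h | h <;> omega
    · simp
  exact_mod_cast this

theorem divSum_bound : ∃ C : ℝ, 1 ≤ C ∧ ∀ d m : ℕ, m ≠ 0 → ∀ β : ℝ, 799 / 800 ≤ β →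
    ((divSum d m : ℤ) : ℝ) * (m : ℝ) ^ (-β) ≤ C * (m : ℝ) ^ (-(399 / 400) : ℝ) := by
  obtain ⟨C, hC, h⟩ := divisor_bound 800 (by norm_num)
  refine ⟨C, hC, fun d m hm β hβ => ?_⟩
  have hm1 : (1 : ℝ) ≤ m := by exact_mod_cast Nat.one_le_iff_ne_zero.2 hm
  have h1 := (divSum_le d m).trans (h m hm)
  calc ((divSum d m : ℤ) : ℝ) * (m : ℝ) ^ (-β)
      ≤ (C * (m : ℝ) ^ (1 / (800 : ℕ) : ℝ)) * (m : ℝ) ^ (-(799 / 800) : ℝ) := by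
        have : (0 : ℝ) ≤ ((divSum d m : ℤ) : ℝ) := by exact_mod_cast divSum_nonneg d m
        gcongr
    _ = _ := by
        rw [mul_assoc, ← Real.rpow_add (by linarith)]
        norm_num

theorem sum_rpow_bound (N : ℕ) :
    ∑ a ∈ Ioc 0 N, (a : ℝ) ^ (-(399 / 400) : ℝ) ≤ 401 * (N : ℝ) ^ (1 / 200 : ℝ) := by
  rcases Nat.eq_zero_or_pos N with rfl | hN
  · simp
  have hN1 : (1 : ℝ) ≤ N := by exact_mod_cast hN
  have hN0 : (0 : ℝ) < N := by linarith
  have h1 : ∑ a ∈ Ioc 0 N, (a : ℝ) ^ (-(399 / 400) : ℝ) ≤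
      ∑ a ∈ Ioc 0 N, (N : ℝ) ^ (1 / 400 : ℝ) * (a : ℝ)⁻¹ := by
    refine sum_le_sum fun a ha => ?_
    rw [mem_Ioc] at ha
    have ha0 : (0 : ℝ) < a := by exact_mod_cast ha.1
    have haN : (a : ℝ) ≤ N := by exact_mod_cast ha.2
    calc (a : ℝ) ^ (-(399 / 400) : ℝ) = (a : ℝ) ^ (1 / 400 : ℝ) * (a : ℝ)⁻¹ := by
          rw [← Real.rpow_neg_one (a : ℝ), ← Real.rpow_add ha0]; norm_num
      _ ≤ _ := by gcongr
  refine h1.trans ?_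
  rw [← mul_sum]
  have h2 : ∑ a ∈ Ioc 0 N, (a : ℝ)⁻¹ ≤ 1 + Real.log N := by
    have := harmonic_le_one_add_log N
    rw [harmonic_eq_sum_Icc] at this
    push_cast at this
    exact this
  have h3 := Real.log_le_rpow_div hN0.le (show (0 : ℝ) < 1 / 400 by norm_num)
  have h4 : (1 : ℝ) ≤ (N : ℝ) ^ (1 / 400 : ℝ) := Real.one_le_rpow hN1 (by norm_num)
  have h5 : ∑ a ∈ Ioc 0 N, (a : ℝ)⁻¹ ≤ 401 * (N : ℝ) ^ (1 / 400 : ℝ) := by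
    refine h2.trans ?_
    have : (N : ℝ) ^ (1 / 400 : ℝ) / (1 / 400) = 400 * (N : ℝ) ^ (1 / 400 : ℝ) := by ring
    linarith
  calc _ ≤ (N : ℝ) ^ (1 / 400 : ℝ) * (401 * (N : ℝ) ^ (1 / 400 : ℝ)) := by gcongr
    _ = 401 * ((N : ℝ) ^ (1 / 400 : ℝ) * (N : ℝ) ^ (1 / 400 : ℝ)) := by ring
    _ = _ := by rw [← Real.rpow_add hN0]; norm_num

theorem tail_bound : ∃ C : ℝ, 0 ≤ C ∧ ∀ n d : ℕ, Good n d → ∀ β : ℝ, 799 / 800 ≤ β →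
    ∑ m ∈ (Ioc 0 (n ^ 40)).filter (fun m => m.Coprime d ∧ ¬ IsSquare m),
      ((divSum d m : ℤ) : ℝ) * (m : ℝ) ^ (-β) ≤ C * (n : ℝ) ^ (-(1 / 2) : ℝ) := by
  obtain ⟨C, hC, hb⟩ := divSum_bound
  refine ⟨18 * C * 401 ^ 2, by positivity, fun n d hG β hβ => ?_⟩
  have hn := hG.hn
  have hnR : (3 : ℝ) ≤ n := by exact_mod_cast hn
  set X := n ^ 40 with hX
  set S := (Ioc 0 X).filter (fun m => m.Coprime d ∧ ¬ IsSquare m) with hS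
  let S' := S.filter (fun m => divSum d m ≠ 0)
  have e1 : ∑ m ∈ S, ((divSum d m : ℤ) : ℝ) * (m : ℝ) ^ (-β) =
      ∑ m ∈ S', ((divSum d m : ℤ) : ℝ) * (m : ℝ) ^ (-β) := by
    symm
    apply sum_filter_of_ne
    intro m _ h h0
    apply h
    rw [h0]; simp
  rw [e1]
  have hex : ∀ m : ℕ, ∃ t : Fin 3 × ℕ × ℕ, m ∈ S' → 1 ≤ t.2.1 ∧ 1 ≤ t.2.2 ∧
      redForm n t.1 t.2.1 t.2.2 = m ∧ ((n : ℤ) - 2) * ((t.2.1 : ℤ) * t.2.2) ≤ 2 * m := by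
    intro m
    by_cases hm : m ∈ S'
    · simp only [S', hS, mem_filter] at hm
      obtain ⟨⟨_, hc, hs⟩, h0⟩ := hm
      obtain ⟨i, a, b, ha, hb, h1, h2⟩ := (hG.red m hc h0).resolve_left hs
      lift a to ℕ using by omega
      lift b to ℕ using by omega
      exact ⟨(i, a, b), fun _ => ⟨by exact_mod_cast ha, by exact_mod_cast hb, h1, h2⟩⟩
    · exact ⟨(0, 0, 0), fun h => absurd h hm⟩
  choose φ hφ using hex
  have hinj : Set.InjOn φ S' := by
    intro m hm m' hm' h
    have h1 := (hφ m hm).2.2.1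
    have h2 := (hφ m' hm').2.2.1
    rw [h] at h1
    have : (m : ℤ) = m' := h1.symm.trans h2
    exact_mod_cast this
  let H : Fin 3 × ℕ × ℕ → ℝ := fun t => (6 * C * (n : ℝ) ^ (-(399 / 400) : ℝ)) *
    ((t.2.1 : ℝ) ^ (-(399 / 400) : ℝ) * (t.2.2 : ℝ) ^ (-(399 / 400) : ℝ))
  have hH0 : ∀ t, 0 ≤ H t := fun t => by
    have : (0 : ℝ) ≤ C := by linarith
    simp only [H]; positivity
  have h1 : ∀ m ∈ S', ((divSum d m : ℤ) : ℝ) * (m : ℝ) ^ (-β) ≤ H (φ m) := by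
    intro m hm
    obtain ⟨ha, hb', h1, h2⟩ := hφ m hm
    have hm0 : 0 < m := by
      simp only [S', hS, mem_filter, mem_Ioc] at hm
      exact hm.1.1.1
    refine (hb d m hm0.ne' β hβ).trans ?_
    set a := (φ m).2.1
    set b := (φ m).2.2
    have haR : (1 : ℝ) ≤ a := by exact_mod_cast ha
    have hbR : (1 : ℝ) ≤ b := by exact_mod_cast hb'
    have hmR : (0 : ℝ) < m := by exact_mod_cast hm0
    have h2R : ((n : ℝ) - 2) * ((a : ℝ) * b) ≤ 2 * m := by exact_mod_cast h2
    have hab : (0 : ℝ) < (a : ℝ) * b := by positivity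
    have h3 : (n : ℝ) * (a * b) / 6 ≤ m := by nlinarith
    have h4 : (m : ℝ) ^ (-(399 / 400) : ℝ) ≤ ((n : ℝ) * (a * b) / 6) ^ (-(399 / 400) : ℝ) :=
      Real.rpow_le_rpow_of_nonpos (by positivity) h3 (by norm_num)
    have h5 : ((n : ℝ) * (a * b) / 6) ^ (-(399 / 400) : ℝ) ≤
        6 * ((n : ℝ) ^ (-(399 / 400) : ℝ) * ((a : ℝ) ^ (-(399 / 400) : ℝ) * (b : ℝ) ^ (-(399 / 400) : ℝ))) := by
      rw [Real.div_rpow (by positivity) (by norm_num), Real.mul_rpow (by positivity) (by positivity),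
        Real.mul_rpow (by positivity) (by positivity), div_eq_mul_inv, mul_comm,
        ← Real.rpow_neg (by norm_num : (0 : ℝ) ≤ 6)]
      gcongr
      calc (6 : ℝ) ^ (- -(399 / 400) : ℝ) ≤ (6 : ℝ) ^ (1 : ℝ) :=
            Real.rpow_le_rpow_of_exponent_le (by norm_num) (by norm_num)
        _ = 6 := Real.rpow_one 6
    calc C * (m : ℝ) ^ (-(399 / 400) : ℝ) ≤ C * (6 * ((n : ℝ) ^ (-(399 / 400) : ℝ) *
          ((a : ℝ) ^ (-(399 / 400) : ℝ) * (b : ℝ) ^ (-(399 / 400) : ℝ)))) := by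
          gcongr
          exact h4.trans h5
      _ = H (φ m) := by simp only [H, a, b]; ring
  have h2 : ∑ m ∈ S', H (φ m) ≤ ∑ t ∈ (univ : Finset (Fin 3)) ×ˢ (Ioc 0 (2 * X) ×ˢ Ioc 0 (2 * X)), H t := by
    rw [← sum_image (g := φ) (f := H) hinj]
    apply sum_le_sum_of_subset_of_nonneg
    · intro t ht
      obtain ⟨m, hm, rfl⟩ := mem_image.1 ht
      obtain ⟨ha, hb', h1, h2⟩ := hφ m hm
      have hmX : m ≤ X := by
        simp only [S', hS, mem_filter, mem_Ioc] at hm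
        exact hm.1.1.2
      have h3 : (1 : ℤ) ≤ (n : ℤ) - 2 := by omega
      have h4 : ((φ m).2.1 : ℤ) * (φ m).2.2 ≤ 2 * m := by nlinarith
      have h5 : (φ m).2.1 * (φ m).2.2 ≤ 2 * m := by exact_mod_cast h4
      simp only [mem_product, mem_univ, mem_Ioc, true_and]
      refine ⟨⟨ha, ?_⟩, hb', ?_⟩ <;> nlinarith
    · intro t _ _; exact hH0 t
  refine (sum_le_sum h1).trans (h2.trans ?_)
  have h3 : ∑ t ∈ (univ : Finset (Fin 3)) ×ˢ (Ioc 0 (2 * X) ×ˢ Ioc 0 (2 * X)), H t =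
      18 * C * (n : ℝ) ^ (-(399 / 400) : ℝ) *
        (∑ a ∈ Ioc 0 (2 * X), (a : ℝ) ^ (-(399 / 400) : ℝ)) ^ 2 := by
    rw [sum_product]
    simp only [H]
    simp only [← mul_sum]
    rw [sum_const, card_univ, Fintype.card_fin, sum_product, sq, sum_mul_sum, nsmul_eq_mul]
    push_cast
    ring
  rw [h3]
  have h4 := sum_rpow_bound (2 * X)
  have hXn : ((2 * X : ℕ) : ℝ) ≤ (n : ℝ) ^ (41 : ℝ) := by
    rw [show (41 : ℝ) = ((41 : ℕ) : ℝ) by norm_num, Real.rpow_natCast, hX]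
    push_cast
    rw [pow_succ _ 40]
    have : (0 : ℝ) ≤ (n : ℝ) ^ 40 := by positivity
    nlinarith
  have h5 : ((2 * X : ℕ) : ℝ) ^ (1 / 200 : ℝ) ≤ (n : ℝ) ^ (41 / 200 : ℝ) := by
    refine (Real.rpow_le_rpow (by positivity) hXn (by norm_num)).trans ?_
    rw [← Real.rpow_mul (by positivity)]
    norm_num
  have h6 : ∑ a ∈ Ioc 0 (2 * X), (a : ℝ) ^ (-(399 / 400) : ℝ) ≤ 401 * (n : ℝ) ^ (41 / 200 : ℝ) :=
    h4.trans (by gcongr)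
  have h7 : (0 : ℝ) ≤ ∑ a ∈ Ioc 0 (2 * X), (a : ℝ) ^ (-(399 / 400) : ℝ) := by positivity
  have hC0 : (0 : ℝ) ≤ C := by linarith
  calc _ ≤ 18 * C * (n : ℝ) ^ (-(399 / 400) : ℝ) * (401 * (n : ℝ) ^ (41 / 200 : ℝ)) ^ 2 := by gcongr
    _ = 18 * C * 401 ^ 2 * ((n : ℝ) ^ (-(399 / 400) : ℝ) * ((n : ℝ) ^ (41 / 200 : ℝ) * (n : ℝ) ^ (41 / 200 : ℝ))) := by ring
    _ ≤ _ := by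
      rw [← Real.rpow_add (by linarith), ← Real.rpow_add (by linarith)]
      gcongr
      · linarith
      · norm_num

end

section
open Filter Topology Finset

theorem chiR_eq_cop (d m : ℕ) (hd : d ≠ 0) : chiR d m = chiR d m * cop d m := by
  unfold cop
  split_ifs with h
  · simp
  · have : chi d m = 0 := by
      unfold chi
      have hz : NeZero d := ⟨hd⟩
      rw [jacobiSym.eq_zero_iff_not_coprime]
      simpa [Int.gcd_natCast_natCast] using h
    simp [chiR, this]

theorem divSum_eq_antidiag (d m : ℕ) :
    ((divSum d m : ℤ) : ℝ) = ∑ x ∈ m.divisorsAntidiagonal, chiR d x.2 := by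
  rw [divSum, Nat.sum_divisorsAntidiagonal' (f := fun _ y => chiR d y)]
  push_cast
  rfl

theorem sum_even_antidiag (u : ℕ → ℝ) (k : ℕ) :
    ∑ x ∈ (2 * k).divisorsAntidiagonal, (if 2 ∣ x.1 then u x.2 else 0) =
      ∑ x ∈ k.divisorsAntidiagonal, u x.2 := by
  rw [← sum_filter]
  symm
  refine Finset.sum_nbij (fun x => (2 * x.1, x.2)) ?_ ?_ ?_ ?_
  · intro x hx
    simp only [Nat.mem_divisorsAntidiagonal, mem_filter] at hx ⊢
    refine ⟨⟨by rw [mul_assoc, hx.1], by omega⟩, Dvd.intro _ rfl⟩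
  · intro x _ y _ h
    simp only [Prod.mk.injEq] at h
    exact Prod.ext (by omega) h.2
  · intro x hx
    simp only [coe_filter, Nat.mem_divisorsAntidiagonal, Set.mem_ofPred_eq] at hx
    obtain ⟨⟨h1, h2⟩, a, ha⟩ := hx
    refine ⟨(a, x.2), ?_, ?_⟩
    · simp only [mem_coe, Nat.mem_divisorsAntidiagonal]
      refine ⟨?_, by omega⟩
      rw [ha, mul_assoc] at h1
      exact Nat.eq_of_mul_eq_mul_left (by norm_num) h1
    · exact Prod.ext ha.symm rfl
  · intro x _; rfl

theorem alt_eq (m : ℕ) : alt m = 1 - 2 * (if 2 ∣ m then 1 else 0) := by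
  unfold alt
  split_ifs with h
  · have : Odd (m + 1) := by rw [Nat.odd_iff]; omega
    rw [this.neg_one_pow]; norm_num
  · have : Even (m + 1) := by rw [Nat.even_iff]; omega
    rw [this.neg_one_pow]; norm_num

theorem coeffA (d m : ℕ) (hd : d ≠ 0) :
    ∑ x ∈ m.divisorsAntidiagonal, (alt x.1 * cop d x.1) * chiR d x.2 =
      cop d m * ((divSum d m : ℤ) : ℝ) -
        2 * (if 2 ∣ m then cop d m * ((divSum d (m / 2) : ℤ) : ℝ) else 0) := by
  have e1 : ∑ x ∈ m.divisorsAntidiagonal, (alt x.1 * cop d x.1) * chiR d x.2 =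
      cop d m * ∑ x ∈ m.divisorsAntidiagonal, chiR d x.2 -
        2 * (cop d m * ∑ x ∈ m.divisorsAntidiagonal, (if 2 ∣ x.1 then chiR d x.2 else 0)) := by
    simp only [mul_sum]
    rw [← sum_sub_distrib]
    refine sum_congr rfl fun x hx => ?_
    have h1 : cop d m = cop d x.1 * cop d x.2 := by
      rw [← cop_mul, (Nat.mem_divisorsAntidiagonal.1 hx).1]
    rw [h1, alt_eq]
    have h2 := chiR_eq_cop d x.2 hd
    rw [h2]
    have h3 : cop d x.2 * cop d x.2 = cop d x.2 := by unfold cop; split_ifs <;> simp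
    split_ifs
    · linear_combination (-(cop d x.1 * chiR d x.2)+ 2 * cop d x.1 * chiR d x.2) * h3
    · linear_combination (-(cop d x.1 * chiR d x.2)) * h3
  rw [e1, divSum_eq_antidiag]
  congr 2
  split_ifs with h
  · obtain ⟨k, rfl⟩ := h
    rw [sum_even_antidiag, divSum_eq_antidiag, Nat.mul_div_cancel_left _ (by norm_num)]
  · rw [sum_eq_zero, mul_zero]
    intro x hx
    rw [if_neg]
    intro h2
    exact h (h2.trans ⟨x.2, (Nat.mem_divisorsAntidiagonal.1 hx).1.symm⟩)

theorem bdd_alt0 : BddSum alt 4 := by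
  have := bddSum_of_periodic (f := alt) (q := 2) (by norm_num) ?_ ?_ alt_abs
  · convert this using 1; norm_num
  · intro m; simp [alt, pow_succ]
  · simp [alt, sum_range_succ]

theorem Lval_alt_nonneg {β : ℝ} (hβ : 0 < β) : 0 ≤ Lval alt β := by
  have h := (psum_tendsto bdd_alt0 hβ).comp
    (tendsto_id.const_mul_atTop' (show 0 < 2 by norm_num) : Tendsto (fun k : ℕ => 2 * k) atTop atTop)
  refine ge_of_tendsto' h fun K => ?_
  simp only [Function.comp]
  induction K with
  | zero => simp [psum]
  | succ K ih =>
    have e : psum alt β (2 * (K + 1)) = psum alt β (2 * K) + ((2 * K + 1 : ℕ) : ℝ) ^ (-β) -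
        ((2 * K + 2 : ℕ) : ℝ) ^ (-β) := by
      unfold psum
      rw [show 2 * (K + 1) = 2 * K + 1 + 1 by ring, Finset.sum_Ioc_succ_top (by omega),
        Finset.sum_Ioc_succ_top (by omega), alt_eq (2 * K + 1), alt_eq (2 * K + 1 + 1),
        if_neg (by omega), if_pos (by omega)]
      push_cast
      ring_nf
    rw [e]
    have : ((2 * K + 2 : ℕ) : ℝ) ^ (-β) ≤ ((2 * K + 1 : ℕ) : ℝ) ^ (-β) :=
      Real.rpow_le_rpow_of_nonpos (by positivity) (by push_cast; linarith) (by linarith)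
    linarith

theorem square_bound : ∃ C : ℝ, 0 ≤ C ∧ ∀ n d : ℕ, Good n d → ∀ β : ℝ, 799 / 800 ≤ β →
    ∑ m ∈ (Ioc (n ^ 40 / 2) (n ^ 40)).filter (fun m => IsSquare m),
      ((divSum d m : ℤ) : ℝ) * (m : ℝ) ^ (-β) ≤ C * (n : ℝ) ^ (-(1 / 2) : ℝ) := by
  obtain ⟨C, hC, hb⟩ := divSum_bound
  have hC0 : 0 ≤ C := by linarith
  refine ⟨2 * C, by positivity, fun n d hG β hβ => ?_⟩
  have hn := hG.hn
  have hnR : (3 : ℝ) ≤ n := by exact_mod_cast hn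
  set X := n ^ 40 with hX
  have hXR : (X : ℝ) = (n : ℝ) ^ (40 : ℝ) := by
    rw [show (40 : ℝ) = ((40 : ℕ) : ℝ) by norm_num, Real.rpow_natCast, hX]; push_cast; rfl
  have hX0 : (0 : ℝ) < X := by rw [hXR]; positivity
  have h1 : ∀ m ∈ (Ioc (X / 2) X).filter (fun m => IsSquare m),
      ((divSum d m : ℤ) : ℝ) * (m : ℝ) ^ (-β) ≤ 2 * C * (n : ℝ) ^ (-(399 / 10) : ℝ) := by
    intro m hm
    simp only [mem_filter, mem_Ioc] at hm
    have hm2 : X ≤ 2 * m := by omega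
    have hm2R : (X : ℝ) / 2 ≤ m := by
      have : (X : ℝ) ≤ 2 * m := by exact_mod_cast hm2
      linarith
    refine (hb d m (by omega) β hβ).trans ?_
    have h2 : (m : ℝ) ^ (-(399 / 400) : ℝ) ≤ ((X : ℝ) / 2) ^ (-(399 / 400) : ℝ) :=
      Real.rpow_le_rpow_of_nonpos (by positivity) hm2R (by norm_num)
    have h3 : ((X : ℝ) / 2) ^ (-(399 / 400) : ℝ) ≤ 2 * (n : ℝ) ^ (-(399 / 10) : ℝ) := by
      rw [Real.div_rpow hX0.le (by norm_num), div_eq_mul_inv, mul_comm,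
        ← Real.rpow_neg (by norm_num : (0 : ℝ) ≤ 2), hXR, ← Real.rpow_mul (by linarith)]
      have : (40 : ℝ) * (-(399 / 400)) = -(399 / 10) := by norm_num
      rw [this]
      gcongr
      calc (2 : ℝ) ^ (- -(399 / 400) : ℝ) ≤ (2 : ℝ) ^ (1 : ℝ) :=
            Real.rpow_le_rpow_of_exponent_le (by norm_num) (by norm_num)
        _ = 2 := Real.rpow_one 2
    calc C * (m : ℝ) ^ (-(399 / 400) : ℝ) ≤ C * (2 * (n : ℝ) ^ (-(399 / 10) : ℝ)) := by
          gcongr; exact h2.trans h3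
      _ = _ := by ring
  refine (sum_le_sum h1).trans ?_
  rw [sum_const, nsmul_eq_mul]
  have hcard : #((Ioc (X / 2) X).filter (fun m => IsSquare m)) ≤ n ^ 20 := by
    calc _ ≤ #((Ioc 0 (n ^ 20)).image (fun s => s * s)) := by
          apply card_le_card
          intro m hm
          simp only [mem_filter, mem_Ioc] at hm
          obtain ⟨⟨h1, h2⟩, s, rfl⟩ := hm
          refine mem_image.2 ⟨s, ?_, rfl⟩
          rw [mem_Ioc]
          constructor
          · rcases Nat.eq_zero_or_pos s with rfl | h
            · omega
            · exact h
          · by_contra hc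
            push Not at hc
            have : n ^ 20 * n ^ 20 < s * s := Nat.mul_self_lt_mul_self hc
            rw [show n ^ 20 * n ^ 20 = X by rw [hX, ← pow_add]] at this
            omega
      _ ≤ #(Ioc 0 (n ^ 20)) := card_image_le
      _ = _ := by simp
  have hcR : ((#((Ioc (X / 2) X).filter (fun m => IsSquare m)) : ℕ) : ℝ) ≤ (n : ℝ) ^ (20 : ℝ) := by
    rw [show (20 : ℝ) = ((20 : ℕ) : ℝ) by norm_num, Real.rpow_natCast]
    exact_mod_cast hcard
  calc _ ≤ (n : ℝ) ^ (20 : ℝ) * (2 * C * (n : ℝ) ^ (-(399 / 10) : ℝ)) := by gcongr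
    _ = 2 * C * ((n : ℝ) ^ (20 : ℝ) * (n : ℝ) ^ (-(399 / 10) : ℝ)) := by ring
    _ ≤ _ := by
      rw [← Real.rpow_add (by linarith)]
      gcongr
      · linarith
      · norm_num

/-- `d ^ 2 * Y ^ (-1/4)` is small. -/
theorem error_small {n d : ℕ} (hG : Good n d) :
    (d : ℝ) * d * ((n ^ 20 : ℕ) : ℝ) ^ (-(1 / 4) : ℝ) ≤ 4 * (n : ℝ) ^ (-(1 / 2) : ℝ) := by
  have hn := hG.hn
  have hnR : (3 : ℝ) ≤ n := by exact_mod_cast hn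
  have hd : (d : ℝ) ≤ 2 * (n : ℝ) ^ (2 : ℝ) := by
    rw [show (2 : ℝ) = ((2 : ℕ) : ℝ) by norm_num, Real.rpow_natCast]
    exact_mod_cast hG.le
  have h1 : ((n ^ 20 : ℕ) : ℝ) ^ (-(1 / 4) : ℝ) = (n : ℝ) ^ (-5 : ℝ) := by
    push_cast
    rw [← Real.rpow_natCast, ← Real.rpow_mul (by linarith)]
    norm_num
  rw [h1]
  calc _ ≤ (2 * (n : ℝ) ^ (2 : ℝ)) * (2 * (n : ℝ) ^ (2 : ℝ)) * (n : ℝ) ^ (-5 : ℝ) := by gcongr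
    _ = 4 * ((n : ℝ) ^ (2 : ℝ) * (n : ℝ) ^ (2 : ℝ) * (n : ℝ) ^ (-5 : ℝ)) := by ring
    _ ≤ _ := by
      rw [← Real.rpow_add (by linarith), ← Real.rpow_add (by linarith)]
      gcongr
      · linarith
      · norm_num

theorem small_eventually (C κ : ℝ) (hκ : 0 < κ) :
    ∃ N : ℕ, ∀ n : ℕ, N ≤ n → C * (n : ℝ) ^ (-(1 / 2) : ℝ) < κ := by
  have h : Tendsto (fun n : ℕ => C * (n : ℝ) ^ (-(1 / 2) : ℝ)) atTop (𝓝 0) := by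
    have := ((tendsto_rpow_neg_atTop (show (0 : ℝ) < 1 / 2 by norm_num)).comp
      tendsto_natCast_atTop_atTop).const_mul C
    simpa using this
  exact eventually_atTop.1 (h.eventually (gt_mem_nhds hκ))

theorem lemmaA : ∃ N : ℕ, ∀ n d : ℕ, N ≤ n → Good n d → Lval (chiR d) (799 / 800) < 0 := by
  obtain ⟨C1, hC1, hT⟩ := tail_bound
  obtain ⟨C2, hC2, hQ⟩ := square_bound
  have hκ : (0 : ℝ) < 2 ^ (1 / 800 : ℝ) - 1 := by
    have := Real.one_lt_rpow (show (1 : ℝ) < 2 by norm_num) (show (0 : ℝ) < 1 / 800 by norm_num)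
    linarith
  set κ : ℝ := 2 ^ (1 / 800 : ℝ) - 1 with hκd
  obtain ⟨N, hN⟩ := small_eventually (C1 + C2 + 128) κ hκ
  refine ⟨N, fun n d hn hG => ?_⟩
  by_contra hneg
  push Not at hneg
  have hsm := hN n hn
  have hm8 := hG.mod8
  have hd0 : d ≠ 0 := by omega
  have hd1 : (1 : ℝ) ≤ d := by exact_mod_cast Nat.one_le_iff_ne_zero.2 hd0
  set β : ℝ := 799 / 800 with hβ
  have hβ0 : 0 < β := by norm_num [hβ]
  have hn3 := hG.hn
  have hhyp := hyperbola (bdd_alt hm8) (bdd_chi hm8) (by linarith) (by linarith)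
    (fun m => abs_mul_le_one (alt_abs m) (cop_abs d m)) (chiR_abs d) (β := β)
    (by norm_num [hβ]) (n ^ 20) (Nat.one_le_pow _ _ (by omega))
  have hYY : n ^ 20 * n ^ 20 = n ^ 40 := by rw [← pow_add]
  rw [hYY] at hhyp
  set X := n ^ 40 with hX
  have hX2 : 1 ≤ X / 2 := by
    have : 2 ≤ X := by
      calc 2 ≤ n := by omega
        _ ≤ n ^ 40 := Nat.le_self_pow (by norm_num) n
    omega
  -- positivity of the product of L-values
  have hodd : ∀ p, p ∣ d → Odd p := fun p hp =>
    Odd.of_dvd_nat (by rw [Nat.odd_iff]; omega) hp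
  obtain ⟨c, hc, hLf⟩ := cop_removal hβ0 hd0 (f := alt) (fun p hp hpd => ⟨alt_abs p, fun m => by
    have h2 := hodd p hpd
    rw [Nat.odd_iff] at h2
    have h3 : alt p = 1 := by rw [alt_eq, if_neg (by omega)]; ring
    rw [h3, one_mul, alt_eq, alt_eq]
    have : 2 ∣ p * m ↔ 2 ∣ m := by
      rw [Nat.prime_two.dvd_mul]
      constructor
      · rintro (h | h)
        · omega
        · exact h
      · exact Or.inr
    simp only [this]⟩) (psum_tendsto bdd_alt0 hβ0)
  have hLL : 0 ≤ Lval (fun m => alt m * cop d m) β * Lval (chiR d) β := by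
    rw [hLf]
    exact mul_nonneg (mul_nonneg hc (Lval_alt_nonneg hβ0)) hneg
  -- the sum
  let G : ℕ → ℝ := fun m => cop d m * ((divSum d m : ℤ) : ℝ) * (m : ℝ) ^ (-β)
  have hG0 : ∀ m, 0 ≤ G m := fun m => by
    have h1 : (0 : ℝ) ≤ ((divSum d m : ℤ) : ℝ) := by exact_mod_cast divSum_nonneg d m
    have h2 := cop_nonneg d m
    simp only [G]; positivity
  have hsum : ∑ m ∈ Ioc 0 X, (∑ x ∈ m.divisorsAntidiagonal, (alt x.1 * cop d x.1) * chiR d x.2) *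
      (m : ℝ) ^ (-β) = ∑ m ∈ Ioc (X / 2) X, G m - κ * ∑ m ∈ Ioc 0 (X / 2), G m := by
    have h1 := sum_multiples (fun m => cop d m * ((divSum d (m / 2) : ℤ) : ℝ) * (m : ℝ) ^ (-β)) 2
      (by norm_num) X
    have h2 : ∑ k ∈ Ioc 0 (X / 2), cop d (2 * k) * ((divSum d (2 * k / 2) : ℤ) : ℝ) *
        ((2 * k : ℕ) : ℝ) ^ (-β) = (2 : ℝ) ^ (-β) * ∑ k ∈ Ioc 0 (X / 2), G k := by
      rw [mul_sum]
      refine sum_congr rfl fun k _ => ?_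
      have h3 : cop d 2 = 1 := by
        unfold cop; rw [if_pos]
        rw [Nat.coprime_two_left, Nat.odd_iff]; omega
      rw [cop_mul, h3, Nat.mul_div_cancel_left _ (by norm_num), Nat.cast_mul,
        Real.mul_rpow (by positivity) (by positivity)]
      simp only [G]
      push_cast
      ring
    have h4 : ∑ m ∈ Ioc 0 X, (∑ x ∈ m.divisorsAntidiagonal, (alt x.1 * cop d x.1) * chiR d x.2) *
      (m : ℝ) ^ (-β) = ∑ m ∈ Ioc 0 X, G m - 2 * ∑ m ∈ Ioc 0 X,
        (if 2 ∣ m then cop d m * ((divSum d (m / 2) : ℤ) : ℝ) * (m : ℝ) ^ (-β) else 0) := by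
      rw [mul_sum, ← sum_sub_distrib]
      refine sum_congr rfl fun m _ => ?_
      rw [coeffA d m hd0]
      simp only [G]
      split_ifs <;> ring
    rw [h4, h1, h2, ← Finset.sum_Ioc_consecutive _ (Nat.zero_le (X / 2)) (Nat.div_le_self X 2)]
    have h5 : 2 * (2 : ℝ) ^ (-β) = κ + 1 := by
      rw [hκd]
      nth_rewrite 1 [← Real.rpow_one (2 : ℝ)]
      rw [← Real.rpow_add (by norm_num)]
      norm_num [hβ]
    linear_combination (-∑ k ∈ Ioc 0 (X / 2), G k) * h5
  have hge : 1 ≤ ∑ m ∈ Ioc 0 (X / 2), G m := by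
    have h1 : G 1 = 1 := by simp [G, cop_one, divSum_one]
    rw [← h1]
    exact single_le_sum (fun m _ => hG0 m) (mem_Ioc.2 ⟨by norm_num, hX2⟩)
  have hle : ∑ m ∈ Ioc (X / 2) X, G m ≤ (C1 + C2) * (n : ℝ) ^ (-(1 / 2) : ℝ) := by
    have h1 := hT n d hG β le_rfl
    have h2 := hQ n d hG β le_rfl
    have hdm : ∀ m : ℕ, (0 : ℝ) ≤ ((divSum d m : ℤ) : ℝ) * (m : ℝ) ^ (-β) := fun m => by
      have h1 : (0 : ℝ) ≤ ((divSum d m : ℤ) : ℝ) := by exact_mod_cast divSum_nonneg d m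
      positivity
    rw [← sum_filter_add_sum_filter_not _ (fun m => IsSquare m)]
    have h3 : ∑ m ∈ (Ioc (X / 2) X).filter (fun m => IsSquare m), G m ≤
        ∑ m ∈ (Ioc (X / 2) X).filter (fun m => IsSquare m),
          ((divSum d m : ℤ) : ℝ) * (m : ℝ) ^ (-β) := by
      refine sum_le_sum fun m _ => ?_
      simp only [G]
      have := (abs_le.1 (cop_abs d m)).2
      nlinarith [hdm m]
    have h4 : ∑ m ∈ (Ioc (X / 2) X).filter (fun m => ¬ IsSquare m), G m ≤
        ∑ m ∈ (Ioc 0 X).filter (fun m => m.Coprime d ∧ ¬ IsSquare m),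
          ((divSum d m : ℤ) : ℝ) * (m : ℝ) ^ (-β) := by
      have h5 : ∑ m ∈ (Ioc (X / 2) X).filter (fun m => ¬ IsSquare m), G m =
          ∑ m ∈ (Ioc (X / 2) X).filter (fun m => m.Coprime d ∧ ¬ IsSquare m),
            ((divSum d m : ℤ) : ℝ) * (m : ℝ) ^ (-β) := by
        rw [sum_filter, sum_filter]
        refine sum_congr rfl fun m _ => ?_
        simp only [G, cop]
        by_cases h6 : m.Coprime d <;> by_cases h7 : IsSquare m <;> simp [h6, h7]
      rw [h5]
      apply sum_le_sum_of_subset_of_nonneg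
      · intro m hm
        simp only [mem_filter, mem_Ioc] at hm ⊢
        exact ⟨⟨by omega, hm.1.2⟩, hm.2⟩
      · intro m _ _; exact hdm m
    linarith
  have herr := error_small hG
  rw [hsum] at hhyp
  have := (abs_le.1 hhyp).1
  nlinarith

end

section
open Filter Topology Finset

theorem Lval_two_nonneg {d : ℕ} (h : d % 8 = 5) : 0 ≤ Lval (chiR d) 2 := by
  refine ge_of_tendsto (psum_tendsto (bdd_chi h) (by norm_num)) ?_
  filter_upwards [eventually_ge_atTop 1] with X hX
  have key : (1 : ℝ) / X ≤ psum (chiR d) 2 X := by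
    induction X, hX using Nat.le_induction with
    | base => simp [psum, chiR_one]
    | succ X hX ih =>
      have e : psum (chiR d) 2 (X + 1) = psum (chiR d) 2 X +
          chiR d (X + 1) * ((X + 1 : ℕ) : ℝ) ^ (-2 : ℝ) := by
        unfold psum
        rw [Finset.sum_Ioc_succ_top (by omega)]
      rw [e]
      have hX0 : (0 : ℝ) < X := by exact_mod_cast hX
      have h2 : ((X + 1 : ℕ) : ℝ) ^ (-2 : ℝ) = 1 / ((X : ℝ) + 1) ^ 2 := by
        rw [Real.rpow_neg (by positivity), show (2 : ℝ) = ((2 : ℕ) : ℝ) by norm_num,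
          Real.rpow_natCast]
        push_cast
        rw [one_div]
      have h3 := (abs_le.1 (chiR_abs d (X + 1))).1
      have h4 : (0 : ℝ) ≤ 1 / ((X : ℝ) + 1) ^ 2 := by positivity
      have h5 : (1 : ℝ) / ((X : ℝ) + 1) + 1 / ((X : ℝ) + 1) ^ 2 ≤ 1 / X := by
        rw [div_add_div _ _ (by positivity) (by positivity), div_le_div_iff₀ (by positivity) (by positivity)]
        nlinarith
      rw [h2]
      push_cast
      nlinarith
  exact le_trans (by positivity) key

theorem coeffB (d1 d m : ℕ) (hd : d ≠ 0) :
    ∑ x ∈ m.divisorsAntidiagonal, (chiR d1 x.1 * cop d x.1) * (chiR d1 x.2 * chiR d x.2) =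
      chiR d1 m * (cop d m * ((divSum d m : ℤ) : ℝ)) := by
  rw [divSum_eq_antidiag, mul_sum, mul_sum]
  refine sum_congr rfl fun x hx => ?_
  rw [← (Nat.mem_divisorsAntidiagonal.1 hx).1, chiR_mul, cop_mul]
  rw [chiR_eq_cop d x.2 hd]
  have h3 : cop d x.2 * cop d x.2 = cop d x.2 := by unfold cop; split_ifs <;> simp
  linear_combination (-(chiR d1 x.1 * chiR d1 x.2 * cop d x.1 * chiR d x.2)) * h3

theorem lemmaB {d1 : ℕ} (h8 : d1 % 8 = 5) (hL : Lval (chiR d1) (799 / 800) < 0) :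
    ∃ N : ℕ, ∀ n d : ℕ, N ≤ n → ¬ Good n d := by
  obtain ⟨C1, hC1, hT⟩ := tail_bound
  have hcont : ContinuousOn (Lval (chiR d1)) (Set.Icc (799 / 800) 2) :=
    (Lval_continuousOn (bdd_chi h8) (by norm_num)).mono Set.Icc_subset_Ici_self
  obtain ⟨β, ⟨hβ1, hβ2⟩, hz⟩ := intermediate_value_Icc (by norm_num) hcont
    (show (0 : ℝ) ∈ Set.Icc _ _ from ⟨hL.le, Lval_two_nonneg h8⟩)
  obtain ⟨N, hN⟩ := small_eventually (C1 + 64 * ((d1 : ℝ) * d1)) 1 one_pos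
  refine ⟨max N (2 * d1 ^ 2 + 3), fun n d hn hG => ?_⟩
  have hsm := hN n ((le_max_left _ _).trans hn)
  have hn2 := (le_max_right _ _).trans hn
  have hm8 := hG.mod8
  have hd0 : d ≠ 0 := by omega
  have hd10 : d1 ≠ 0 := by omega
  have hβ0 : 0 < β := by linarith
  have hn3 := hG.hn
  have hcop : d1.Coprime d := by
    apply Nat.coprime_of_dvd
    intro p hp h1 h2
    have h3 := hG.ram p hp h2
    have h4 : p ≤ d1 := Nat.le_of_dvd (by omega) h1
    have h5 : p ^ 2 ≤ d1 ^ 2 := Nat.pow_le_pow_left h4 2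
    omega
  have hdd : (1 : ℝ) ≤ 2 * (d1 * d : ℕ) := by
    have h1 : 1 ≤ d1 * d := Nat.mul_pos (by omega) (by omega)
    have : (1 : ℝ) ≤ (d1 * d : ℕ) := by exact_mod_cast h1
    linarith
  have hhyp := hyperbola (bdd_chicop h8 (by omega) hcop) (bdd_chichi h8 (by omega) hcop)
    hdd hdd (fun m => abs_mul_le_one (chiR_abs d1 m) (cop_abs d m))
    (fun m => abs_mul_le_one (chiR_abs d1 m) (chiR_abs d m)) (β := β)
    (by linarith) (n ^ 20) (Nat.one_le_pow _ _ (by omega))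
  have hYY : n ^ 20 * n ^ 20 = n ^ 40 := by rw [← pow_add]
  rw [hYY] at hhyp
  set X := n ^ 40 with hX
  obtain ⟨c, hc, hLf⟩ := cop_removal hβ0 hd0 (f := chiR d1)
    (fun p hp hpd => ⟨chiR_abs d1 p, fun m => chiR_mul d1 p m⟩) (psum_tendsto (bdd_chi h8) hβ0)
  rw [hz, mul_zero] at hLf
  rw [hLf, zero_mul, sub_zero] at hhyp
  simp only [coeffB d1 d _ hd0] at hhyp
  have hdm : ∀ m : ℕ, (0 : ℝ) ≤ ((divSum d m : ℤ) : ℝ) * (m : ℝ) ^ (-β) := fun m => by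
    have h1 : (0 : ℝ) ≤ ((divSum d m : ℤ) : ℝ) := by exact_mod_cast divSum_nonneg d m
    positivity
  set F : ℕ → ℝ := fun m => chiR d1 m * (cop d m * ((divSum d m : ℤ) : ℝ)) * (m : ℝ) ^ (-β) with hF
  have hlow : 1 - C1 * (n : ℝ) ^ (-(1 / 2) : ℝ) ≤ ∑ m ∈ Ioc 0 X, F m := by
    rw [← sum_filter_add_sum_filter_not _ (fun m => IsSquare m)]
    have h3 : 1 ≤ ∑ m ∈ (Ioc 0 X).filter (fun m => IsSquare m), F m := by
      have h1 : F 1 = 1 := by simp [hF, cop_one, divSum_one, chiR_one]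
      rw [← h1]
      refine single_le_sum (f := F) (fun m hm => ?_) (mem_filter.2 ⟨mem_Ioc.2 ⟨by norm_num, ?_⟩, ⟨1, rfl⟩⟩)
      · obtain ⟨s, rfl⟩ := (mem_filter.1 hm).2
        simp only [hF]
        rw [chiR_mul]
        have h2 := cop_nonneg d (s * s)
        have h3 := hdm (s * s)
        calc (0 : ℝ) ≤ (chiR d1 s * chiR d1 s) * cop d (s * s) *
              (((divSum d (s * s) : ℤ) : ℝ) * ((s * s : ℕ) : ℝ) ^ (-β)) :=
              mul_nonneg (mul_nonneg (mul_self_nonneg _) h2) h3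
          _ = _ := by ring
      · exact Nat.one_le_pow _ _ (by omega)
    have h4 : -∑ m ∈ (Ioc 0 X).filter (fun m => m.Coprime d ∧ ¬ IsSquare m),
          ((divSum d m : ℤ) : ℝ) * (m : ℝ) ^ (-β) ≤
        ∑ m ∈ (Ioc 0 X).filter (fun m => ¬ IsSquare m), F m := by
      rw [← sum_neg_distrib, sum_filter, sum_filter]
      refine sum_le_sum fun m _ => ?_
      simp only [hF, cop]
      by_cases h6 : m.Coprime d <;> by_cases h7 : IsSquare m <;> simp [h6, h7]
      have h8 := (abs_le.1 (chiR_abs d1 m)).1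
      have h9 := hdm m
      rw [if_pos h6, if_pos h6]
      nlinarith
    have h5 := hT n d hG β hβ1
    linarith
  have herr := error_small hG
  have hup := (abs_le.1 hhyp).2
  have e : 4 * (2 * ((d1 * d : ℕ) : ℝ)) * (2 * ((d1 * d : ℕ) : ℝ)) * ((n ^ 20 : ℕ) : ℝ) ^ (-(1 / 4) : ℝ) =
      16 * ((d1 : ℝ) * d1) * ((d : ℝ) * d * ((n ^ 20 : ℕ) : ℝ) ^ (-(1 / 4) : ℝ)) := by
    push_cast; ring
  rw [e] at hup
  have h10 : 16 * ((d1 : ℝ) * d1) * ((d : ℝ) * d * ((n ^ 20 : ℕ) : ℝ) ^ (-(1 / 4) : ℝ)) ≤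
      16 * ((d1 : ℝ) * d1) * (4 * (n : ℝ) ^ (-(1 / 2) : ℝ)) := by gcongr
  linarith

theorem good_bounded : ∃ N : ℕ, ∀ n d : ℕ, N ≤ n → ¬ Good n d := by
  obtain ⟨N0, h0⟩ := lemmaA
  by_cases h : ∃ n d, N0 ≤ n ∧ Good n d
  · obtain ⟨n, d, hn, hG⟩ := h
    exact lemmaB hG.mod8 (h0 n d hn hG)
  · push Not at h
    exact ⟨N0, fun n d hn => h n d hn⟩


end

/-- There are only finitely many unit-generated real quadratic orders (the orders
`O_{n²-4}` for `n ≥ 3` and `O_{n²+4}` for `n ≥ 1`) having class number one. -/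
theorem finite_unitGenerated_classNumber_one :
    ({n : ℤ | 3 ≤ n ∧ classNumber (n ^ 2 - 4) = 1} ∪
      {n : ℤ | 1 ≤ n ∧ classNumber (n ^ 2 + 4) = 1}).Finite := by
  obtain ⟨N, hN⟩ := good_bounded
  apply (Set.finite_Icc (0 : ℤ) (N + 19)).subset
  have key : ∀ (n e : ℤ), 1 ≤ n → (e = 1 ∨ e = -1) → classNumber (n ^ 2 - 4 * e) = 1 →
      n ∈ Set.Icc (0 : ℤ) (N + 19) := by
    intro n e hn he h
    lift n to ℕ using by omega
    rw [Set.mem_Icc]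
    refine ⟨by omega, ?_⟩
    by_contra hc
    push Not at hc
    obtain ⟨d, hd⟩ := good_of_classNumber (n := n) (by omega) he h
    exact hN n d (by omega) hd
  rintro n (⟨h1, h2⟩ | ⟨h1, h2⟩)
  · exact key n 1 (by omega) (Or.inl rfl) (by rw [← h2]; congr 1)
  · exact key n (-1) (by omega) (Or.inr rfl) (by rw [← h2]; congr 1)
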